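/- arXiv:1912.11614 — 6 statements merged into one kernel-verified Lean document; each statement's English description precedes it below -/
import Mathlib

section
/- Let n, m be integers with n ≥ m ≥ 2 and n − m even. Then the function x ↦ sin^n(x)/x^m is Lebesgue integrable on ℝ and ∫_ℝ sin^n(x)/x^m dx = (−1)^{(n+m)/2} · π/(2^n (m−1)!) · ∑_{l=0}^{n} (−1)^l · binom(n,l) · (2l−n)^{m−1} · sgn(2l−n), where sgn denotes the sign function (with sgn(0) = 0). -/
open MeasureTheory Real Finset

/-!
Write `sin x ^ n = (I / 2) ^ n * ∑ l, (-1) ^ l * n.choose l * exp ((2 * l - n) * x * I)`. The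
functional `f ↦ ∑ l, (-1) ^ l * n.choose l * f (2 * l - n)` is, up to sign, an `n`-th finite
difference, so it annihilates polynomials of degree less than `n`. By Peano's kernel theorem, a
functional `∑ i, c i * f (a i)` that annihilates polynomials of degree at most `k` is integration of
`f⁽ᵏ⁺¹⁾` against `K / k!`, where `K s = ∑ i, c i * (a i - s)⁺ ^ k` has compact support. Applied to
`f s = exp (x * s * I)`, this says that `(∑ i, c i * exp (a i * x * I)) / x ^ (k + 1)` is, up to
constants, the inverse Fourier transform of `K`. It is therefore bounded near the origin, hence
integrable, and Fourier inversion at `0` evaluates its integral as a multiple of `K 0`.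
-/

open scoped FourierTransform

lemma integrable_of_norm_le_of_abs_pow_mul_norm_le {E : Type*} [NormedAddCommGroup E] {f : ℝ → E}
    {m : ℕ} {A B : ℝ} (hm : 2 ≤ m) (hf : AEStronglyMeasurable f) (hA : ∀ x, ‖f x‖ ≤ A)
    (hB : ∀ x, |x| ^ m * ‖f x‖ ≤ B) : Integrable f := by
  refine (integrable_inv_one_add_sq.const_mul (2 * A + B)).mono' hf (ae_of_all _ fun x => ?_)
  have sq_le : x ^ 2 ≤ 1 + |x| ^ m := by
    rw [← sq_abs]
    rcases le_total |x| 1 with hx | hx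
    · have := pow_le_one₀ (n := 2) (abs_nonneg x) hx
      have := pow_nonneg (abs_nonneg x) m
      linarith
    · linarith [pow_le_pow_right₀ hx hm]
  rw [← div_eq_mul_inv, le_div_iff₀ (by positivity)]
  nlinarith [hA x, hB x, mul_le_mul_of_nonneg_right sq_le (norm_nonneg (f x))]

section Taylor

variable {E : Type*} [NormedAddCommGroup E] [NormedSpace ℝ E] {k : ℕ} {b x R : ℝ}

lemma setIntegral_Ioc_posPart_sub_pow_smul (hk : k ≠ 0) (hb : b ≤ x) (hR : x ≤ R) (g : ℝ → E) :
    ∫ s in Set.Ioc b R, (x - s)⁺ ^ k • g s = ∫ s in b..x, (x - s) ^ k • g s := by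
  rw [intervalIntegral.integral_of_le hb,
    setIntegral_eq_of_subset_of_forall_sdiff_eq_zero measurableSet_Ioc
      (Set.Ioc_subset_Ioc_right hR) fun s hs => ?_]
  · refine setIntegral_congr_fun measurableSet_Ioc fun s hs => ?_
    simp only [posPart_of_nonneg (sub_nonneg.mpr hs.2)]
  · have : x - s ≤ 0 := by
      by_contra! h
      exact hs.2 ⟨hs.1.1, by linarith⟩
    rw [posPart_eq_zero.mpr this, zero_pow hk, zero_smul]

lemma eq_taylor_add_integral_posPart_sub_pow_smul [CompleteSpace E] {f : ℝ → E} (hk : k ≠ 0)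
    (hf : ContDiff ℝ (k + 1 : ℕ) f) (hb : b < x) (hR : x ≤ R) :
    f x = ∑ j ∈ range (k + 1), ((j.factorial : ℝ)⁻¹ * (x - b) ^ j) • iteratedDeriv j f b +
      (k.factorial : ℝ)⁻¹ • ∫ s in Set.Ioc b R, (x - s)⁺ ^ k • iteratedDeriv (k + 1) f s := by
  have within_eq {j : ℕ} (hj : j ≤ k + 1) {s : ℝ} (hs : s ∈ Set.uIcc b x) :
      iteratedDerivWithin j f (Set.uIcc b x) s = iteratedDeriv j f s :=
    iteratedDerivWithin_eq_iteratedDeriv (uniqueDiffOn_uIcc hb.ne)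
      (hf.contDiffAt.of_le (by exact_mod_cast hj)) hs
  have taylor := taylor_integral_remainder (x₀ := b) (x := x) (n := k) hf.contDiffOn
  rw [sub_eq_iff_eq_add', taylor_within_apply] at taylor
  rw [taylor, setIntegral_Ioc_posPart_sub_pow_smul hk hb.le hR, ← intervalIntegral.integral_smul]
  congr 1
  · refine sum_congr rfl fun j hj => ?_
    rw [within_eq (mem_range.mp hj).le Set.left_mem_uIcc]
  · refine intervalIntegral.integral_congr fun s hs => ?_
    simp only [within_eq le_rfl hs, smul_smul, div_eq_inv_mul]

end Taylor

section PeanoKernel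

variable {ι : Type*} {t : Finset ι} {k : ℕ}

lemma sum_mul_sub_pow_eq_zero {R : Type*} [CommRing R] {c a : ι → R}
    (hc : ∀ j ≤ k, ∑ i ∈ t, c i * a i ^ j = 0) {j : ℕ} (hj : j ≤ k) (x : R) :
    ∑ i ∈ t, c i * (a i - x) ^ j = 0 := by
  simp_rw [sub_eq_add_neg, add_pow, mul_sum]
  rw [sum_comm]
  refine sum_eq_zero fun p hp => ?_
  simp_rw [mul_assoc, ← mul_assoc (c _), ← sum_mul]
  rw [hc p (by grind), zero_mul]

/-- The Peano kernel of order `k` of the functional `f ↦ ∑ i ∈ t, c i * f (a i)`, without its usual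
factor `1 / k!`. It is only used for `k ≠ 0`: since `0 ^ 0 = 1`, for `k = 0` it is the constant
`∑ i ∈ t, c i` instead of a step function. -/
noncomputable def peanoKernel (t : Finset ι) (c : ι → ℂ) (a : ι → ℝ) (k : ℕ) (x : ℝ) : ℂ :=
  ∑ i ∈ t, c i * ((a i - x)⁺ : ℝ) ^ k

variable {c : ι → ℂ} {a : ι → ℝ}

@[fun_prop]
lemma continuous_peanoKernel : Continuous (peanoKernel t c a k) := by
  unfold peanoKernel
  fun_prop

lemma peanoKernel_eq_zero_of_le_abs (hk : k ≠ 0) (hc : ∀ j ≤ k, ∑ i ∈ t, c i * (a i : ℂ) ^ j = 0)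
    {R x : ℝ} (hR : ∀ i ∈ t, |a i| ≤ R) (hx : R ≤ |x|) : peanoKernel t c a k x = 0 := by
  rcases le_abs.mp hx with hx | hx
  · refine sum_eq_zero fun i hi => ?_
    have : a i - x ≤ 0 := by linarith [(abs_le.mp (hR i hi)).2]
    simp [posPart_eq_zero.mpr this, hk]
  · rw [← sum_mul_sub_pow_eq_zero hc le_rfl x]
    refine sum_congr rfl fun i hi => ?_
    have : 0 ≤ a i - x := by linarith [(abs_le.mp (hR i hi)).1]
    rw [posPart_of_nonneg this, Complex.ofReal_sub]

lemma integrable_peanoKernel (hk : k ≠ 0) (hc : ∀ j ≤ k, ∑ i ∈ t, c i * (a i : ℂ) ^ j = 0) :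
    Integrable (peanoKernel t c a k) := by
  obtain ⟨R, hR⟩ := (t.image fun i => |a i|).exists_le
  refine continuous_peanoKernel.integrable_of_hasCompactSupport <|
    HasCompactSupport.intro (isCompact_Icc (a := -R) (b := R)) fun x hx => ?_
  refine peanoKernel_eq_zero_of_le_abs hk hc (fun i hi => hR _ (mem_image_of_mem _ hi)) ?_
  exact (not_le.mp fun h => hx (abs_le.mp h)).le

lemma peanoKernel_zero (hk : k ≠ 0) (hc : ∑ i ∈ t, c i * (a i : ℂ) ^ k = 0) :
    peanoKernel t c a k 0 = 1 / 2 * ∑ i ∈ t, c i * (a i : ℂ) ^ k * Real.sign (a i) := by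
  have posPart_pow (y : ℝ) :
      ((y⁺ : ℝ) : ℂ) ^ k = 1 / 2 * ((y : ℂ) ^ k + (y : ℂ) ^ k * Real.sign y) := by
    rcases lt_trichotomy y 0 with hy | rfl | hy
    · simp [posPart_eq_zero.mpr hy.le, Real.sign_of_neg hy, hk]
    · simp [hk]
    · rw [posPart_of_nonneg hy.le, Real.sign_of_pos hy]
      push_cast
      ring
  calc peanoKernel t c a k 0
      = 1 / 2 * (∑ i ∈ t, c i * (a i : ℂ) ^ k +
          ∑ i ∈ t, c i * (a i : ℂ) ^ k * Real.sign (a i)) := by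
        simp_rw [peanoKernel, sub_zero, posPart_pow, ← sum_add_distrib, mul_sum]
        exact sum_congr rfl fun i _ => by ring
    _ = _ := by rw [hc, zero_add]

variable {E : Type*} [NormedAddCommGroup E] [NormedSpace ℂ E]

lemma sum_smul_taylor_eq_zero (hc : ∀ j ≤ k, ∑ i ∈ t, c i * (a i : ℂ) ^ j = 0) (b : ℝ)
    (d : ℕ → E) :
    ∑ i ∈ t, c i • ∑ j ∈ range (k + 1), ((j.factorial : ℝ)⁻¹ * (a i - b) ^ j) • d j = 0 := by
  simp_rw [smul_sum]
  rw [sum_comm]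
  refine sum_eq_zero fun j hj => ?_
  calc ∑ i ∈ t, c i • ((j.factorial : ℝ)⁻¹ * (a i - b) ^ j) • d j
      = (∑ i ∈ t, c i * ((a i : ℂ) - b) ^ j) • (j.factorial : ℝ)⁻¹ • d j := by
        simp_rw [sum_smul, mul_comm _ ((_ : ℝ) ^ j), mul_smul, ← Complex.ofReal_sub,
          ← Complex.ofReal_pow, Complex.coe_smul]
    _ = 0 := by rw [sum_mul_sub_pow_eq_zero hc (mem_range_succ_iff.mp hj), zero_smul]

theorem sum_smul_eq_integral_peanoKernel_smul [CompleteSpace E] {f : ℝ → E} (hk : k ≠ 0)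
    (hc : ∀ j ≤ k, ∑ i ∈ t, c i * (a i : ℂ) ^ j = 0) (hf : ContDiff ℝ (k + 1 : ℕ) f) :
    ∑ i ∈ t, c i • f (a i) =
      (k.factorial : ℝ)⁻¹ • ∫ s, peanoKernel t c a k s • iteratedDeriv (k + 1) f s := by
  obtain ⟨R, hR⟩ := (t.image fun i => |a i|).exists_le
  replace hR : ∀ i ∈ t, |a i| ≤ R := fun i hi => hR _ (mem_image_of_mem _ hi)
  have cont : Continuous (iteratedDeriv (k + 1) f) := hf.continuous_iteratedDeriv' _
  have kernel : ∫ s, peanoKernel t c a k s • iteratedDeriv (k + 1) f s =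
      ∑ i ∈ t, c i • ∫ s in Set.Ioc (-R - 1) R, (a i - s)⁺ ^ k • iteratedDeriv (k + 1) f s := by
    rw [← setIntegral_eq_integral_of_forall_compl_eq_zero (s := Set.Ioc (-R - 1) R) fun s hs => by
      rw [peanoKernel_eq_zero_of_le_abs hk hc hR (by grind [le_abs]), zero_smul]]
    simp_rw [peanoKernel, sum_smul, mul_smul, ← Complex.ofReal_pow, Complex.coe_smul]
    rw [integral_finsetSum]
    · simp_rw [integral_smul]
    · have weight_cont (i : ι) : Continuous fun s => (a i - s)⁺ ^ k := by fun_prop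
      exact fun i _ => (((weight_cont i).smul cont).const_smul (c i)).integrableOn_Ioc
  rw [kernel, smul_sum, ← zero_add (∑ i ∈ t, _ • _ • _),
    ← sum_smul_taylor_eq_zero hc (-R - 1) fun j => iteratedDeriv j f (-R - 1), ← sum_add_distrib]
  refine sum_congr rfl fun i hi => ?_
  obtain ⟨lower, upper⟩ := abs_le.mp (hR i hi)
  rw [smul_comm _ (c i), ← smul_add,
    ← eq_taylor_add_integral_posPart_sub_pow_smul hk hf (by linarith) upper]

end PeanoKernel

section ExponentialSum

variable {ι : Type*} {t : Finset ι} {c : ι → ℂ} {a : ι → ℝ} {k : ℕ}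

lemma iteratedDeriv_cexp_mul_ofReal (z : ℂ) (n : ℕ) :
    iteratedDeriv n (fun s : ℝ => Complex.exp (z * s)) =
      fun s : ℝ => z ^ n * Complex.exp (z * s) := by
  induction n with
  | zero => simp
  | succ n ih =>
    rw [iteratedDeriv_succ, ih]
    ext s
    have hexp : HasDerivAt (fun s : ℝ => Complex.exp (z * s)) (Complex.exp (z * s) * z) s := by
      simpa using ((hasDerivAt_id (s : ℂ)).const_mul z).cexp.comp_ofReal
    rw [(hexp.const_mul (z ^ n)).deriv]
    ring

/-- The exponential sum with frequencies `a i` and coefficients `c i`: the function whose quotient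
by a power of `x` is to be integrated. -/
noncomputable def expSum (t : Finset ι) (c : ι → ℂ) (a : ι → ℝ) (x : ℝ) : ℂ :=
  ∑ i ∈ t, c i * Complex.exp (a i * x * Complex.I)

@[fun_prop]
lemma continuous_expSum : Continuous (expSum t c a) := by
  unfold expSum
  fun_prop

lemma norm_expSum_le (x : ℝ) : ‖expSum t c a x‖ ≤ ∑ i ∈ t, ‖c i‖ := by
  refine norm_sum_le_of_le t fun i _ => ?_
  rw [norm_mul, ← Complex.ofReal_mul, Complex.norm_exp_ofReal_mul_I, mul_one]

lemma expSum_div_pow_eq_fourierInv (hk : k ≠ 0)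
    (hc : ∀ j ≤ k, ∑ i ∈ t, c i * (a i : ℂ) ^ j = 0) {x : ℝ} (hx : x ≠ 0) :
    expSum t c a x / x ^ (k + 1) =
      Complex.I ^ (k + 1) / k.factorial * 𝓕⁻ (peanoKernel t c a k) (x / (2 * π)) := by
  have fourierInv_eq : 𝓕⁻ (peanoKernel t c a k) (x / (2 * π)) =
      ∫ s : ℝ, peanoKernel t c a k s * Complex.exp (x * Complex.I * s) := by
    rw [Real.fourierInv_eq']
    congr 1 with s
    rw [smul_eq_mul, mul_comm, RCLike.inner_apply, conj_trivial]
    congr 2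
    push_cast
    field_simp
  have peano := sum_smul_eq_integral_peanoKernel_smul hk hc
    (f := fun s => Complex.exp (x * Complex.I * s))
    (contDiff_const.mul Complex.ofRealCLM.contDiff).cexp
  have hx' : (x : ℂ) ≠ 0 := Complex.ofReal_ne_zero.mpr hx
  calc expSum t c a x / x ^ (k + 1)
      = (∑ i ∈ t, c i • Complex.exp (x * Complex.I * a i)) / x ^ (k + 1) := by
        simp_rw [expSum, smul_eq_mul, mul_rotate (x : ℂ), mul_comm Complex.I, mul_right_comm]
    _ = (k.factorial : ℂ)⁻¹ * ((x * Complex.I) ^ (k + 1) *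
          ∫ s : ℝ, peanoKernel t c a k s * Complex.exp (x * Complex.I * s)) / x ^ (k + 1) := by
        rw [peano, iteratedDeriv_cexp_mul_ofReal, ← integral_const_mul]
        simp_rw [smul_eq_mul, mul_left_comm]
        simp
    _ = _ := by
        rw [fourierInv_eq, mul_pow]
        field_simp

lemma norm_fourierInv_le_integral_norm {V E : Type*} [NormedAddCommGroup V] [InnerProductSpace ℝ V]
    [FiniteDimensional ℝ V] [MeasurableSpace V] [BorelSpace V] [NormedAddCommGroup E]
    [NormedSpace ℂ E] (f : V → E) (w : V) : ‖𝓕⁻ f w‖ ≤ ∫ v, ‖f v‖ :=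
  VectorFourier.norm_fourierIntegral_le_integral_norm ..

theorem integrable_expSum_div_pow (hk : k ≠ 0)
    (hc : ∀ j ≤ k, ∑ i ∈ t, c i * (a i : ℂ) ^ j = 0) :
    Integrable fun x : ℝ => expSum t c a x / x ^ (k + 1) := by
  refine integrable_of_norm_le_of_abs_pow_mul_norm_le (m := k + 1)
    (A := ‖Complex.I ^ (k + 1) / k.factorial‖ * ∫ s, ‖peanoKernel t c a k s‖)
    (B := ∑ i ∈ t, ‖c i‖) (by lia)
    (continuous_expSum.measurable.div (by fun_prop)).aestronglyMeasurable
    (fun x => ?_) (fun x => ?_)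
  · rcases eq_or_ne x 0 with rfl | hx
    · simp only [Complex.ofReal_zero, zero_pow k.succ_ne_zero, div_zero, norm_zero]
      positivity
    · rw [expSum_div_pow_eq_fourierInv hk hc hx, norm_mul]
      gcongr
      exact norm_fourierInv_le_integral_norm _ _
  · calc |x| ^ (k + 1) * ‖expSum t c a x / x ^ (k + 1)‖
        = |x| ^ (k + 1) / |x| ^ (k + 1) * ‖expSum t c a x‖ := by
          rw [norm_div, norm_pow, Complex.norm_real, Real.norm_eq_abs]
          ring
      _ ≤ 1 * ‖expSum t c a x‖ := by gcongr; exact div_self_le_one _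
      _ ≤ ∑ i ∈ t, ‖c i‖ := by rw [one_mul]; exact norm_expSum_le x

lemma fourierInv_peanoKernel_ae_eq (hk : k ≠ 0)
    (hc : ∀ j ≤ k, ∑ i ∈ t, c i * (a i : ℂ) ^ j = 0) :
    𝓕⁻ (peanoKernel t c a k) =ᵐ[volume] fun w : ℝ => k.factorial / Complex.I ^ (k + 1) *
      (expSum t c a (2 * π * w) / ((2 * π * w : ℝ) : ℂ) ^ (k + 1)) := by
  filter_upwards [Measure.ae_ne volume (0 : ℝ)] with w hw
  rw [expSum_div_pow_eq_fourierInv hk hc (by positivity),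
    mul_div_cancel_left₀ w two_pi_pos.ne']
  have factorial_ne_zero := Nat.cast_ne_zero (R := ℂ).mpr k.factorial_ne_zero
  field_simp

lemma peanoKernel_zero_eq_integral_expSum_div_pow (hk : k ≠ 0)
    (hc : ∀ j ≤ k, ∑ i ∈ t, c i * (a i : ℂ) ^ j = 0) :
    peanoKernel t c a k 0 = k.factorial / Complex.I ^ (k + 1) *
      ((2 * π)⁻¹ * ∫ x : ℝ, expSum t c a x / x ^ (k + 1)) := by
  have ae_eq := fourierInv_peanoKernel_ae_eq hk hc
  have integrable_fourierInv : Integrable (𝓕⁻ (peanoKernel t c a k)) :=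
    (((integrable_expSum_div_pow hk hc).comp_mul_left' two_pi_pos.ne').const_mul _).congr ae_eq.symm
  have integrable_fourier : Integrable (𝓕 (peanoKernel t c a k)) := by
    simpa only [Real.fourierInv_eq_fourier_neg, neg_neg] using integrable_fourierInv.comp_neg
  calc peanoKernel t c a k 0
      = 𝓕 (𝓕⁻ (peanoKernel t c a k)) 0 := by
        rw [continuous_peanoKernel.fourier_fourierInv_eq (integrable_peanoKernel hk hc)
          integrable_fourier]
    _ = ∫ w, 𝓕⁻ (peanoKernel t c a k) w := by simp [Real.fourier_eq]
    _ = _ := by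
        rw [integral_congr_ae ae_eq, integral_const_mul,
          Measure.integral_comp_mul_left (fun x : ℝ => expSum t c a x / (x : ℂ) ^ (k + 1)),
          abs_of_pos (by positivity), Complex.real_smul]

theorem integral_expSum_div_pow (hk : k ≠ 0)
    (hc : ∀ j ≤ k, ∑ i ∈ t, c i * (a i : ℂ) ^ j = 0) :
    ∫ x : ℝ, expSum t c a x / x ^ (k + 1) =
      Complex.I ^ (k + 1) * π / k.factorial * ∑ i ∈ t, c i * (a i : ℂ) ^ k * Real.sign (a i) := by
  have kernel_zero := peanoKernel_zero_eq_integral_expSum_div_pow hk hc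
  rw [peanoKernel_zero hk (hc k le_rfl)] at kernel_zero
  have factorial_ne_zero := Nat.cast_ne_zero (R := ℂ).mpr k.factorial_ne_zero
  have pi_ne_zero := Complex.ofReal_ne_zero.mpr Real.pi_ne_zero
  push_cast at kernel_zero
  field_simp at kernel_zero ⊢
  linear_combination -kernel_zero

end ExponentialSum

lemma sum_neg_one_pow_mul_choose_mul_pow_eq_zero {n j : ℕ} (hj : j < n) :
    ∑ l ∈ range (n + 1), ((-1) ^ l * n.choose l : ℂ) * ((2 * l - n : ℝ) : ℂ) ^ j = 0 := by
  have fwdDiff_eq_zero : ∑ l ∈ range (n + 1),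
      ((-1) ^ (n - l) * n.choose l : ℤ) • (-n / 2 + l • 1 : ℂ) ^ j = 0 := by
    rw [← fwdDiff_iter_eq_sum_shift 1 (fun z : ℂ => z ^ j), fwdDiff_iter_pow_eq_zero_of_lt hj,
      Pi.zero_apply]
  rw [← mul_zero ((-1) ^ n * 2 ^ j : ℂ), ← fwdDiff_eq_zero, mul_sum]
  refine sum_congr rfl fun l hl => ?_
  obtain ⟨d, rfl⟩ := Nat.exists_eq_add_of_le (mem_range_succ_iff.mp hl)
  have node_eq : ((2 * l - (l + d : ℕ) : ℝ) : ℂ) = 2 * (-(l + d : ℕ) / 2 + l • 1) := by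
    push_cast
    ring
  rw [node_eq, mul_pow, add_tsub_cancel_left, zsmul_eq_mul]
  push_cast
  have sign_eq : (-1 : ℂ) ^ (l + d) * (-1) ^ d = (-1) ^ l := by
    rw [pow_add, mul_assoc, ← mul_pow, neg_one_mul, neg_neg, one_pow, mul_one]
  rw [← sign_eq]
  ring

lemma sin_pow_eq_expSum (n : ℕ) (x : ℝ) :
    ((Real.sin x ^ n : ℝ) : ℂ) = (Complex.I / 2) ^ n *
      expSum (range (n + 1)) (fun l => (-1) ^ l * n.choose l) (fun l => 2 * l - n) x := by
  have sin_eq : Complex.sin x =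
      Complex.I / 2 * (-Complex.exp (x * Complex.I) + Complex.exp (-x * Complex.I)) := by
    rw [Complex.sin]
    ring
  rw [Complex.ofReal_pow, Complex.ofReal_sin, sin_eq, mul_pow, add_pow, expSum]
  congr 1
  refine sum_congr rfl fun l hl => ?_
  obtain ⟨d, rfl⟩ := Nat.exists_eq_add_of_le (mem_range_succ_iff.mp hl)
  rw [add_tsub_cancel_left, neg_pow, mul_assoc ((-1) ^ l), ← Complex.exp_nat_mul,
    ← Complex.exp_nat_mul, ← Complex.exp_add, mul_right_comm]
  congr 2
  push_cast
  ring

theorem integrable_sin_pow_div_pow {n m : ℕ} (hm : 2 ≤ m) (hmn : m ≤ n) :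
    Integrable fun x : ℝ => Real.sin x ^ n / x ^ m := by
  obtain ⟨k, rfl⟩ := Nat.exists_eq_add_of_le' (one_le_two.trans hm)
  have integrable_re := ((integrable_expSum_div_pow (by lia) fun j hj =>
    sum_neg_one_pow_mul_choose_mul_pow_eq_zero (n := n) (hj.trans_lt hmn)).const_mul
      ((Complex.I / 2) ^ n)).re
  refine integrable_re.congr (ae_of_all _ fun x => ?_)
  dsimp only
  rw [← mul_div_assoc, ← sin_pow_eq_expSum]
  norm_cast

theorem ofReal_integral_sin_pow_div_pow {n m : ℕ} (hm : 2 ≤ m) (hmn : m ≤ n) :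
    ((∫ x : ℝ, Real.sin x ^ n / x ^ m : ℝ) : ℂ) =
      Complex.I ^ (n + m) * (π / (2 ^ n * (m - 1).factorial) *
        ∑ l ∈ range (n + 1), (-1 : ℝ) ^ l * n.choose l * (2 * (l : ℝ) - n) ^ (m - 1) *
            Real.sign (2 * (l : ℝ) - n) : ℝ) := by
  obtain ⟨k, rfl⟩ := Nat.exists_eq_add_of_le' (one_le_two.trans hm)
  simp_rw [← integral_complex_ofReal, Complex.ofReal_div, sin_pow_eq_expSum, mul_div_assoc,
    integral_const_mul, Complex.ofReal_pow]
  rw [integral_expSum_div_pow (by lia) fun j hj =>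
    sum_neg_one_pow_mul_choose_mul_pow_eq_zero (hj.trans_lt hmn)]
  push_cast
  rw [div_pow]
  ring

lemma eq_neg_one_pow_mul_of_ofReal_eq_I_pow_mul {x y : ℝ} {N : ℕ}
    (h : (x : ℂ) = Complex.I ^ N * y) : x = (-1) ^ (N / 2) * y := by
  rcases N.even_or_odd' with ⟨q, rfl | rfl⟩
  · rw [pow_mul, Complex.I_sq] at h
    rw [Nat.mul_div_cancel_left q two_pos]
    exact_mod_cast h
  · have imaginary : (x : ℂ) = ((-1) ^ q * y : ℝ) * Complex.I := by
      rw [h, pow_succ, pow_mul, Complex.I_sq]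
      push_cast
      ring
    have hx : x = 0 := by
      rw [← Complex.ofReal_re x, imaginary, Complex.re_ofReal_mul, Complex.I_re, mul_zero]
    have hy : (-1) ^ q * y = 0 := by
      simpa only [Complex.im_ofReal_mul, Complex.I_im, mul_one, imaginary] using Complex.ofReal_im x
    rw [hx, (mul_eq_zero_iff_left (by simp)).mp hy, mul_zero]

-- If `n + m` is odd, both sides vanish, so the truncated division `(n + m) / 2` is harmless.
theorem stmt_0_general (n m : ℕ) (hm : 2 ≤ m) (hmn : m ≤ n) :
    Integrable (fun x : ℝ => Real.sin x ^ n / x ^ m) ∧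
    ∫ x : ℝ, Real.sin x ^ n / x ^ m =
      (-1 : ℝ) ^ ((n + m) / 2) * Real.pi / (2 ^ n * (Nat.factorial (m - 1))) *
        ∑ l ∈ Finset.range (n + 1),
          (-1 : ℝ) ^ l * (n.choose l : ℝ) * (2 * (l : ℝ) - n) ^ (m - 1) *
            Real.sign (2 * (l : ℝ) - n) := by
  refine ⟨integrable_sin_pow_div_pow hm hmn, ?_⟩
  rw [eq_neg_one_pow_mul_of_ofReal_eq_I_pow_mul (ofReal_integral_sin_pow_div_pow hm hmn),
    mul_div_assoc, mul_assoc]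

theorem stmt_0 (n m : ℕ) (hm : 2 ≤ m) (hmn : m ≤ n) (hpar : Even (n - m)) :
    Integrable (fun x : ℝ => Real.sin x ^ n / x ^ m) ∧
    ∫ x : ℝ, Real.sin x ^ n / x ^ m =
      (-1 : ℝ) ^ ((n + m) / 2) * Real.pi / (2 ^ n * (Nat.factorial (m - 1))) *
        ∑ l ∈ Finset.range (n + 1),
          (-1 : ℝ) ^ l * (n.choose l : ℝ) * (2 * (l : ℝ) - n) ^ (m - 1) *
            Real.sign (2 * (l : ℝ) - n) :=
  stmt_0_general n m hm hmn
end

section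
/- For every integer n ≥ 2, the function x ↦ sin^n(x)/x^n is Lebesgue integrable on ℝ and ∫_ℝ sin^n(x)/x^n dx = π/(2^{n−1}(n−1)!) · ∑_{l=0}^{⌊n/2⌋} (−1)^l · binom(n,l) · (n−2l)^{n−1}. -/
open MeasureTheory Real Finset

/-! The Fourier transform of `sinc ^ n` is a B-spline of degree `n - 1`. Since
`sinc x * cos (a * x)` is half the integral of `cos (b * x)` over `b ∈ [a - 1, a + 1]`, multiplying
an integrand by `sinc` averages its cosine transform over a window of length `2`. Such a window
integral turns an `m`-fold difference (with step `2`) of a truncated power into the `(m + 1)`-fold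
difference of the truncated power of the next degree. The induction starts at `n = 2`, where
`sinc x ^ 2 * cos (a * x)` is a second difference in `b` of `(1 - cos (b * x)) / x ^ 2`, whose
integral `π * |b|` comes from writing `1 / x ^ 2` as a Laplace transform; second differences do not
distinguish `|b|` from twice the positive part of `b`. At `a = 0`, the terms with `l > n / 2` drop
out because the truncated power vanishes there. -/

open scoped fwdDiff

section Laplace

lemma integrableOn_exp_neg_mul_mul_cos {t : ℝ} (ht : 0 < t) (b : ℝ) :
    IntegrableOn (fun x ↦ exp (-(t * x)) * cos (b * x)) (Set.Ioi 0) := by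
  have hre : (-t + b * Complex.I : ℂ).re < 0 := by simpa using ht
  refine (integrableOn_exp_mul_complex_Ioi hre 0).re.congr (ae_of_all _ fun x ↦ ?_)
  simp [Complex.exp_re]

lemma integral_exp_neg_mul_mul_cos {t : ℝ} (ht : 0 < t) (b : ℝ) :
    ∫ x in Set.Ioi 0, exp (-(t * x)) * cos (b * x) = t / (t ^ 2 + b ^ 2) := by
  have hre : (-t + b * Complex.I : ℂ).re < 0 := by simpa using ht
  calc ∫ x in Set.Ioi 0, exp (-(t * x)) * cos (b * x)
      = ∫ x in Set.Ioi (0 : ℝ), (Complex.exp ((-t + b * Complex.I) * x)).re := by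
        simp [Complex.exp_re]
    _ = (∫ x in Set.Ioi (0 : ℝ), Complex.exp ((-t + b * Complex.I) * x)).re :=
        integral_re (integrableOn_exp_mul_complex_Ioi hre 0)
    _ = t / (t ^ 2 + b ^ 2) := by
        rw [integral_exp_mul_complex_Ioi hre]
        simp [Complex.div_re, Complex.normSq_apply, sq]

lemma integral_exp_neg_mul_mul_one_sub_cos {t : ℝ} (ht : 0 < t) :
    ∫ x in Set.Ioi 0, exp (-(t * x)) * (1 - cos x) = (t * (1 + t ^ 2))⁻¹ := by
  calc ∫ x in Set.Ioi 0, exp (-(t * x)) * (1 - cos x)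
      = ∫ x in Set.Ioi 0, (exp (-(t * x)) * cos (0 * x) - exp (-(t * x)) * cos (1 * x)) := by
        simp [mul_sub]
    _ = t / (t ^ 2 + 0 ^ 2) - t / (t ^ 2 + 1 ^ 2) := by
        rw [integral_sub (integrableOn_exp_neg_mul_mul_cos ht 0)
          (integrableOn_exp_neg_mul_mul_cos ht 1), integral_exp_neg_mul_mul_cos ht,
          integral_exp_neg_mul_mul_cos ht]
    _ = (t * (1 + t ^ 2))⁻¹ := by
        have : 1 + t ^ 2 ≠ 0 := by positivity
        field_simp
        ring

variable {s : ℝ}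

lemma integral_rpow_sub_one_mul_exp_neg_mul (hs : 0 < s) {x : ℝ} (hx : 0 < x) :
    ∫ t in Set.Ioi 0, t ^ (s - 1) * exp (-(t * x)) = Gamma s / x ^ s := by
  simp_rw [mul_comm _ x]
  rw [integral_rpow_mul_exp_neg_mul_Ioi hs hx, one_div, inv_rpow hx.le]
  ring

lemma integrableOn_rpow_sub_one_mul_exp_neg_mul (hs : 0 < s) {x : ℝ} (hx : 0 < x) :
    IntegrableOn (fun t ↦ t ^ (s - 1) * exp (-(t * x))) (Set.Ioi 0) := by
  refine .of_integral_ne_zero ?_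
  rw [integral_rpow_sub_one_mul_exp_neg_mul hs hx]
  have := Gamma_pos_of_pos hs
  positivity

lemma integrable_uncurry_mul_rpow_mul_exp_neg (hs : 0 < s) {f : ℝ → ℝ}
    (hf : IntegrableOn (fun x ↦ f x / x ^ s) (Set.Ioi 0)) :
    Integrable (Function.uncurry fun x t ↦ f x * (t ^ (s - 1) * exp (-(t * x))))
      ((volume.restrict (Set.Ioi 0)).prod (volume.restrict (Set.Ioi 0))) := by
  have hfm : AEStronglyMeasurable f (volume.restrict (Set.Ioi 0)) := by
    refine (hf.aestronglyMeasurable.mul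
      (by fun_prop : Measurable fun x : ℝ ↦ x ^ s).aestronglyMeasurable).congr ?_
    filter_upwards [ae_restrict_mem measurableSet_Ioi] with x hx
    exact div_mul_cancel₀ _ (rpow_pos_of_pos hx s).ne'
  have hker : Measurable fun z : ℝ × ℝ ↦ z.2 ^ (s - 1) * exp (-(z.2 * z.1)) := by fun_prop
  refine (integrable_prod_iff (hfm.comp_fst.mul hker.aestronglyMeasurable)).2
    ⟨?_, (hf.norm.const_mul (Gamma s)).congr ?_⟩ <;>
    filter_upwards [ae_restrict_mem measurableSet_Ioi] with x hx
  · exact (integrableOn_rpow_sub_one_mul_exp_neg_mul hs hx).const_mul (f x)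
  calc Gamma s * ‖f x / x ^ s‖ = ‖f x‖ * (Gamma s / x ^ s) := by
        rw [norm_div, norm_of_nonneg (rpow_pos_of_pos hx s).le]
        ring
    _ = ∫ t in Set.Ioi 0, ‖f x * (t ^ (s - 1) * exp (-(t * x)))‖ := by
        rw [← integral_rpow_sub_one_mul_exp_neg_mul hs hx, ← integral_const_mul]
        refine setIntegral_congr_fun measurableSet_Ioi fun t (ht : 0 < t) ↦ ?_
        rw [norm_mul, norm_of_nonneg (by positivity : 0 ≤ t ^ (s - 1) * exp (-(t * x)))]

lemma Gamma_mul_integral_Ioi_div_rpow (hs : 0 < s) {f : ℝ → ℝ}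
    (hf : IntegrableOn (fun x ↦ f x / x ^ s) (Set.Ioi 0)) :
    Gamma s * ∫ x in Set.Ioi 0, f x / x ^ s =
      ∫ t in Set.Ioi 0, t ^ (s - 1) * ∫ x in Set.Ioi 0, exp (-(t * x)) * f x := by
  calc Gamma s * ∫ x in Set.Ioi 0, f x / x ^ s
      = ∫ x in Set.Ioi 0, ∫ t in Set.Ioi 0, f x * (t ^ (s - 1) * exp (-(t * x))) := by
        rw [← integral_const_mul]
        refine setIntegral_congr_fun measurableSet_Ioi fun x hx ↦ ?_
        rw [integral_const_mul, integral_rpow_sub_one_mul_exp_neg_mul hs hx]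
        ring
    _ = ∫ t in Set.Ioi 0, ∫ x in Set.Ioi 0, f x * (t ^ (s - 1) * exp (-(t * x))) :=
        integral_integral_swap (integrable_uncurry_mul_rpow_mul_exp_neg hs hf)
    _ = ∫ t in Set.Ioi 0, t ^ (s - 1) * ∫ x in Set.Ioi 0, exp (-(t * x)) * f x := by
        simp_rw [← integral_const_mul, mul_comm (f _), mul_assoc]

end Laplace

section Sinc

lemma integrable_sinc_sq : Integrable fun x ↦ sinc x ^ 2 := by
  refine (integrable_inv_one_add_sq.const_mul 2).mono'
    (continuous_sinc.pow 2).aestronglyMeasurable (ae_of_all _ fun x ↦ ?_)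
  have hsinc : sinc x ^ 2 ≤ 1 := (sq_le_one_iff_abs_le_one _).2 (abs_sinc_le_one x)
  have hsin : x ^ 2 * sinc x ^ 2 ≤ 1 := by
    rcases eq_or_ne x 0 with rfl | hx
    · simp
    · rw [sinc_of_ne_zero hx, ← mul_pow, mul_div_cancel₀ _ hx]
      exact sin_sq_le_one x
  rw [norm_of_nonneg (sq_nonneg _), ← div_eq_mul_inv, le_div_iff₀ (by positivity)]
  linarith

lemma integrable_sinc_pow {n : ℕ} (hn : 2 ≤ n) : Integrable fun x ↦ sinc x ^ n := by
  obtain ⟨k, rfl⟩ := Nat.exists_eq_add_of_le' hn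
  simp_rw [pow_add]
  refine integrable_sinc_sq.bdd_mul (c := 1) (continuous_sinc.pow k).aestronglyMeasurable
    (ae_of_all _ fun x ↦ ?_)
  rw [norm_pow]
  exact pow_le_one₀ (norm_nonneg _) (abs_sinc_le_one x)

lemma sinc_pow_ae_eq {μ : Measure ℝ} [NullSingletonClass μ] (n : ℕ) :
    (fun x ↦ sinc x ^ n) =ᵐ[μ] fun x ↦ sin x ^ n / x ^ n := by
  filter_upwards [μ.ae_ne 0] with x hx
  rw [sinc_of_ne_zero hx, div_pow]

lemma one_sub_cos_mul_div_sq_eq_sinc_sq (b : ℝ) {x : ℝ} (hx : x ≠ 0) :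
    (1 - cos (b * x)) / x ^ 2 = b ^ 2 / 2 * sinc (b / 2 * x) ^ 2 := by
  rcases eq_or_ne b 0 with rfl | hb
  · simp
  have hcos : cos (b * x) = 1 - 2 * sin (b / 2 * x) ^ 2 := by
    rw [← cos_two_mul_eq_one_sub]
    ring_nf
  rw [sinc_of_ne_zero (by positivity), hcos]
  field_simp
  ring

lemma integrable_one_sub_cos_mul_div_sq (b : ℝ) :
    Integrable fun x ↦ (1 - cos (b * x)) / x ^ 2 := by
  rcases eq_or_ne b 0 with rfl | hb
  · simp
  refine ((integrable_sinc_sq.comp_mul_left' (div_ne_zero hb two_ne_zero)).const_mul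
    (b ^ 2 / 2)).congr ?_
  filter_upwards [volume.ae_ne 0] with x hx
  exact (one_sub_cos_mul_div_sq_eq_sinc_sq b hx).symm

lemma integral_Ioi_one_sub_cos_div_sq : ∫ x in Set.Ioi 0, (1 - cos x) / x ^ 2 = π / 2 := by
  have hint : IntegrableOn (fun x ↦ (1 - cos x) / x ^ (2 : ℝ)) (Set.Ioi 0) := by
    simpa using (integrable_one_sub_cos_mul_div_sq 1).integrableOn
  calc ∫ x in Set.Ioi 0, (1 - cos x) / x ^ 2
      = ∫ t in Set.Ioi 0, t ^ ((2 : ℝ) - 1) * ∫ x in Set.Ioi 0, exp (-(t * x)) * (1 - cos x) := by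
        simpa using Gamma_mul_integral_Ioi_div_rpow two_pos hint
    _ = ∫ t in Set.Ioi (0 : ℝ), (1 + t ^ 2)⁻¹ := by
        refine setIntegral_congr_fun measurableSet_Ioi fun t (ht : 0 < t) ↦ ?_
        rw [integral_exp_neg_mul_mul_one_sub_cos ht]
        rw [show (2 : ℝ) - 1 = 1 by norm_num, rpow_one]
        field_simp
    _ = π / 2 := by simp

lemma integral_one_sub_cos_mul_div_sq (b : ℝ) :
    ∫ x, (1 - cos (b * x)) / x ^ 2 = π * |b| := by
  have hone : ∫ x, (1 - cos x) / x ^ 2 = π := by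
    have := integral_comp_abs (f := fun x ↦ (1 - cos x) / x ^ 2)
    simp only [cos_abs, sq_abs] at this
    rw [this, integral_Ioi_one_sub_cos_div_sq]
    ring
  rcases eq_or_ne b 0 with rfl | hb
  · simp
  calc ∫ x, (1 - cos (b * x)) / x ^ 2
      = ∫ x, b ^ 2 * ((1 - cos (b * x)) / (b * x) ^ 2) := by
        congr! 2 with x
        field_simp
    _ = b ^ 2 * (|b⁻¹| * π) := by
        rw [integral_const_mul, Measure.integral_comp_mul_left (fun x ↦ (1 - cos x) / x ^ 2) b,
          hone, smul_eq_mul]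
    _ = π * |b| := by
        rw [abs_inv, ← sq_abs]
        field_simp

end Sinc

section Spline

lemma continuous_fwdDiff_iter {M G : Type*} [AddCommMonoid M] [TopologicalSpace M]
    [ContinuousAdd M] [AddCommGroup G] [TopologicalSpace G] [IsTopologicalAddGroup G] {f : M → G}
    (hf : Continuous f) (h : M) (n : ℕ) : Continuous ((Δ_[h])^[n] f) := by
  induction n with
  | zero => exact hf
  | succ n ih =>
    rw [Function.iterate_succ_apply']
    exact (ih.comp (continuous_add_const h)).sub ih

variable {E : Type*} [NormedAddCommGroup E] [NormedSpace ℝ E] {f f' : ℝ → E}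

lemma integral_fwdDiff_iter {M α : Type*} [AddCommMonoid M] [MeasurableSpace α] {μ : Measure α}
    {F : M → α → E} (hF : ∀ b, Integrable (F b) μ) (h : M) (n : ℕ) (y : M) :
    ∫ x, (Δ_[h])^[n] (F · x) y ∂μ = (Δ_[h])^[n] (fun b ↦ ∫ x, F b x ∂μ) y := by
  simp only [fwdDiff_iter_eq_sum_shift, ← Int.cast_smul_eq_zsmul ℝ]
  rw [integral_finsetSum]
  · simp only [integral_smul]
  · exact fun k _ ↦ (hF _).smul _

lemma hasDerivAt_fwdDiff_iter (hf : ∀ x, HasDerivAt f (f' x) x) (h : ℝ) (n : ℕ) (x : ℝ) :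
    HasDerivAt ((Δ_[h])^[n] f) ((Δ_[h])^[n] f' x) x := by
  induction n generalizing x with
  | zero => exact hf x
  | succ n ih =>
    simp only [Function.iterate_succ_apply']
    exact ((ih (x + h)).comp_add_const x h).sub (ih x)

lemma integral_fwdDiff_iter_deriv [CompleteSpace E] (hf : ∀ x, HasDerivAt f (f' x) x)
    (hf' : Continuous f') (h : ℝ) (n : ℕ) (c : ℝ) :
    ∫ x in c..c + h, (Δ_[h])^[n] f' x = (Δ_[h])^[n + 1] f c := by
  rw [intervalIntegral.integral_eq_sub_of_hasDerivAt
    (fun x _ ↦ hasDerivAt_fwdDiff_iter hf h n x)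
    ((continuous_fwdDiff_iter hf' h n).intervalIntegrable _ _), Function.iterate_succ_apply']
  rfl

/-- The truncated power `y ↦ y₊ ^ k` of spline theory. For `k = 0` it is the constant `1`, not the
Heaviside function. -/
noncomputable def truncPow (k : ℕ) (y : ℝ) : ℝ := max y 0 ^ k

variable {k : ℕ}

lemma continuous_truncPow (k : ℕ) : Continuous (truncPow k) := by
  unfold truncPow
  fun_prop

lemma truncPow_of_nonneg (k : ℕ) {y : ℝ} (hy : 0 ≤ y) : truncPow k y = y ^ k := by
  rw [truncPow, max_eq_left hy]

lemma truncPow_of_nonpos (hk : k ≠ 0) {y : ℝ} (hy : y ≤ 0) : truncPow k y = 0 := by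
  rw [truncPow, max_eq_right hy, zero_pow hk]

lemma hasDerivAt_truncPow_succ (hk : k ≠ 0) (y : ℝ) :
    HasDerivAt (truncPow (k + 1)) ((k + 1) * truncPow k y) y := by
  refine hasDerivAt_of_hasDerivAt_of_ne' (x := 0) (g := fun y ↦ (k + 1) * truncPow k y)
    (fun y hy ↦ ?_) (continuous_truncPow _).continuousAt
    ((continuous_truncPow k).const_mul _).continuousAt y
  rcases hy.lt_or_gt with hy | hy
  · rw [truncPow_of_nonpos hk hy.le, mul_zero]
    refine (hasDerivAt_const y 0).congr_of_eventuallyEq ?_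
    filter_upwards [gt_mem_nhds hy] with z hz
    exact truncPow_of_nonpos k.succ_ne_zero hz.le
  · rw [truncPow_of_nonneg k hy.le]
    refine (by simpa using hasDerivAt_pow (k + 1) y :
      HasDerivAt (fun z ↦ z ^ (k + 1)) ((k + 1) * y ^ k) y).congr_of_eventuallyEq ?_
    filter_upwards [lt_mem_nhds hy] with z hz
    exact truncPow_of_nonneg (k + 1) hz.le

lemma integral_fwdDiff_iter_truncPow (hk : k ≠ 0) (h : ℝ) (n : ℕ) (c : ℝ) :
    ∫ x in c..c + h, (Δ_[h])^[n] (truncPow k) x =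
      (Δ_[h])^[n + 1] (truncPow (k + 1)) c / (k + 1) := by
  have hsmul : (Δ_[h])^[n] (fun y ↦ (k + 1) * truncPow k y) =
      ((k : ℝ) + 1) • (Δ_[h])^[n] (truncPow k) :=
    fwdDiff_iter_const_smul h ((k : ℝ) + 1) (truncPow k) n
  rw [← integral_fwdDiff_iter_deriv (hasDerivAt_truncPow_succ hk)
    ((continuous_truncPow k).const_mul _), hsmul, eq_div_iff (by positivity), mul_comm,
    ← intervalIntegral.integral_const_mul]
  rfl

lemma fwdDiff_iter_two_abs (h y : ℝ) :
    (Δ_[h])^[2] (fun b ↦ |b|) y = 2 * (Δ_[h])^[2] (truncPow 1) y := by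
  have habs (b : ℝ) : |b| = 2 * truncPow 1 b - b := by
    rcases le_total 0 b with hb | hb
    · rw [truncPow_of_nonneg 1 hb, abs_of_nonneg hb]
      ring
    · rw [truncPow_of_nonpos one_ne_zero hb, abs_of_nonpos hb]
      ring
  simp only [Function.iterate_succ_apply', Function.iterate_zero_apply, fwdDiff, habs]
  ring

lemma fwdDiff_two_iter_truncPow_neg (hk : k ≠ 0) (n : ℕ) :
    (Δ_[2])^[n] (truncPow k) (-n) =
      ∑ l ∈ range (n / 2 + 1), (-1 : ℝ) ^ l * n.choose l * ((n : ℝ) - 2 * l) ^ k := by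
  calc (Δ_[2])^[n] (truncPow k) (-n)
      = ∑ l ∈ range (n + 1), (-1 : ℝ) ^ l * n.choose l * truncPow k (n - 2 * l) := by
        rw [fwdDiff_iter_eq_sum_shift, ← sum_range_reflect]
        refine sum_congr rfl fun l hl ↦ ?_
        have hl : l ≤ n := by grind
        rw [Nat.add_sub_cancel, Nat.sub_sub_self hl, Nat.choose_symm hl, zsmul_eq_mul,
          nsmul_eq_mul, Nat.cast_sub hl]
        push_cast
        ring_nf
    _ = ∑ l ∈ range (n / 2 + 1), (-1 : ℝ) ^ l * n.choose l * truncPow k (n - 2 * l) := by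
        refine (sum_subset (range_subset_range.2 (by lia)) fun l _ hl ↦ ?_).symm
        have hl : (n : ℝ) ≤ 2 * l := by exact_mod_cast (by grind : n ≤ 2 * l)
        rw [truncPow_of_nonpos hk (by linarith), mul_zero]
    _ = _ := by
        refine sum_congr rfl fun l hl ↦ ?_
        have hl : (2 * l : ℝ) ≤ n := by exact_mod_cast (by grind : 2 * l ≤ n)
        rw [truncPow_of_nonneg k (by linarith)]

end Spline

section CosineTransform

lemma sinc_mul_cos_eq_integral (a x : ℝ) :
    sinc x * cos (a * x) = 1 / 2 * ∫ b in (a - 1)..(a + 1), cos (b * x) := by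
  rcases eq_or_ne x 0 with rfl | hx
  · norm_num
  rw [sinc_of_ne_zero hx, intervalIntegral.integral_comp_mul_right _ hx, integral_cos,
    smul_eq_mul, add_mul, sub_mul, one_mul, sin_add, sin_sub]
  field_simp
  ring

lemma integral_sinc_mul_mul_cos {μ : Measure ℝ} [SFinite μ] {g : ℝ → ℝ} (hg : Integrable g μ)
    (a : ℝ) : ∫ x, sinc x * g x * cos (a * x) ∂μ =
      1 / 2 * ∫ b in (a - 1)..(a + 1), ∫ x, g x * cos (b * x) ∂μ := by
  have : IsFiniteMeasure (volume.restrict (Set.uIoc (a - 1) (a + 1))) :=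
    isFiniteMeasure_restrict.2 (by simp [Set.uIoc])
  have hprod : Integrable (Function.uncurry fun b x ↦ g x * cos (b * x))
      ((volume.restrict (Set.uIoc (a - 1) (a + 1))).prod μ) := by
    have hcos : Continuous fun z : ℝ × ℝ ↦ cos (z.1 * z.2) := by fun_prop
    exact (hg.comp_snd _).mul_bdd (c := 1) hcos.aestronglyMeasurable
      (ae_of_all _ fun z ↦ abs_cos_le_one _)
  rw [intervalIntegral_integral_swap hprod, ← integral_const_mul]
  congr! 2 with _
  rw [intervalIntegral.integral_const_mul, mul_right_comm, sinc_mul_cos_eq_integral]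
  ring

lemma sinc_sq_mul_cos_eq_fwdDiff (a : ℝ) {x : ℝ} (hx : x ≠ 0) :
    sinc x ^ 2 * cos (a * x) =
      1 / 4 * (Δ_[2])^[2] (fun b ↦ (1 - cos (b * x)) / x ^ 2) (a - 2) := by
  have hcos : cos ((a + 2) * x) + cos ((a - 2) * x) = 2 * cos (a * x) * (1 - 2 * sin x ^ 2) := by
    rw [add_mul, sub_mul, cos_add, cos_sub, cos_two_mul_eq_one_sub]
    ring
  calc sinc x ^ 2 * cos (a * x)
      = 1 / 4 * ((2 * cos (a * x) - (cos ((a + 2) * x) + cos ((a - 2) * x))) / x ^ 2) := by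
        rw [sinc_of_ne_zero hx, hcos]
        ring
    _ = 1 / 4 * (Δ_[2])^[2] (fun b ↦ (1 - cos (b * x)) / x ^ 2) (a - 2) := by
        simp only [Function.iterate_succ_apply', Function.iterate_zero_apply, fwdDiff,
          sub_add_cancel]
        ring

lemma integral_sinc_sq_mul_cos (a : ℝ) :
    ∫ x, sinc x ^ 2 * cos (a * x) = π / 2 * (Δ_[2])^[2] (truncPow 1) (a - 2) := by
  calc ∫ x, sinc x ^ 2 * cos (a * x)
      = ∫ x, 1 / 4 * (Δ_[2])^[2] (fun b ↦ (1 - cos (b * x)) / x ^ 2) (a - 2) := by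
        refine integral_congr_ae ?_
        filter_upwards [volume.ae_ne 0] with x hx
        exact sinc_sq_mul_cos_eq_fwdDiff a hx
    _ = 1 / 4 * (Δ_[2])^[2] (fun b ↦ π * |b|) (a - 2) := by
        rw [integral_const_mul, integral_fwdDiff_iter integrable_one_sub_cos_mul_div_sq]
        simp only [integral_one_sub_cos_mul_div_sq]
    _ = 1 / 4 * (π * (Δ_[2])^[2] (fun b ↦ |b|) (a - 2)) :=
        congrArg _ (congrFun (fwdDiff_iter_const_smul 2 π (fun b ↦ |b|) 2) (a - 2))
    _ = π / 2 * (Δ_[2])^[2] (truncPow 1) (a - 2) := by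
        rw [fwdDiff_iter_two_abs]
        ring

theorem integral_sinc_pow_mul_cos {n : ℕ} (hn : 2 ≤ n) (a : ℝ) :
    ∫ x, sinc x ^ n * cos (a * x) =
      π / (2 ^ (n - 1) * (n - 1).factorial) * (Δ_[2])^[n] (truncPow (n - 1)) (a - n) := by
  induction n, hn using Nat.le_induction generalizing a with
  | base => simpa using integral_sinc_sq_mul_cos a
  | succ n hn ih =>
    obtain ⟨k, rfl⟩ := Nat.exists_eq_add_of_le' hn
    have hwindow : ∫ b in (a - 1)..(a + 1), (Δ_[2])^[k + 2] (truncPow (k + 1)) (b - (k + 2)) =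
        (Δ_[2])^[k + 3] (truncPow (k + 2)) (a - (k + 3)) / (k + 2) := by
      have := integral_fwdDiff_iter_truncPow k.succ_ne_zero 2 (k + 2) (a - (k + 3))
      rw [intervalIntegral.integral_comp_sub_right]
      convert this using 2 <;> push_cast <;> ring
    calc ∫ x, sinc x ^ (k + 3) * cos (a * x)
        = ∫ x, sinc x * sinc x ^ (k + 2) * cos (a * x) := by simp only [pow_succ' _ (k + 2)]
      _ = 1 / 2 * ∫ b in (a - 1)..(a + 1), π / (2 ^ (k + 1) * (k + 1).factorial) *
            (Δ_[2])^[k + 2] (truncPow (k + 1)) (b - (k + 2)) := by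
          rw [integral_sinc_mul_mul_cos (integrable_sinc_pow hn)]
          simp [ih]
      _ = π / (2 ^ (k + 2) * (k + 2).factorial) *
            (Δ_[2])^[k + 3] (truncPow (k + 2)) (a - (k + 3)) := by
          rw [intervalIntegral.integral_const_mul, hwindow, Nat.factorial_succ (k + 1)]
          push_cast
          field_simp
          ring
      _ = _ := by
          push_cast
          ring_nf

end CosineTransform

theorem stmt_1 (n : ℕ) (hn : 2 ≤ n) :
    Integrable (fun x : ℝ => Real.sin x ^ n / x ^ n) ∧
    ∫ x : ℝ, Real.sin x ^ n / x ^ n =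
      Real.pi / (2 ^ (n - 1) * (Nat.factorial (n - 1))) *
        ∑ l ∈ Finset.range (n / 2 + 1),
          (-1 : ℝ) ^ l * (n.choose l : ℝ) * ((n : ℝ) - 2 * l) ^ (n - 1) := by
  refine ⟨(integrable_sinc_pow hn).congr (sinc_pow_ae_eq n), ?_⟩
  calc ∫ x, sin x ^ n / x ^ n = ∫ x, sinc x ^ n * cos (0 * x) := by
        simpa using (integral_congr_ae (sinc_pow_ae_eq n)).symm
    _ = π / (2 ^ (n - 1) * (n - 1).factorial) * (Δ_[2])^[n] (truncPow (n - 1)) (-n) := by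
        rw [integral_sinc_pow_mul_cos hn, zero_sub]
    _ = _ := by rw [fwdDiff_two_iter_truncPow_neg (by lia)]
end

section
/- Let n, m be integers with n ≥ m ≥ 2 and n − m even. Then ∫_0^∞ sin^n(x)/x^m dx = −(−1)^{(m−n)/2} · π/(2^{n+1}(m−1)!) · ∑'_{l=0}^{n} (−1)^l · binom(n,l) · (n−2l)^{m−1} · sgn(2l−n), where ∑' means the term with 2l = n (if n is even) is omitted, sgn denotes the sign function, and the integral is a Lebesgue integral over (0,∞). -/
/-!
Since `p! / x ^ (p + 1) = ∫₀^∞ t ^ p exp (-t x) dt`, Fubini turns the integral of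
`p! sin x ^ n / x ^ (p + 1)` into that of `t ^ p L(t)`, where `L` is the Laplace transform of
`sin ^ n`. Expanding `sin x ^ n` into exponentials of frequencies `b = n - 2 l` makes
`(2 i) ^ n L(t)` the alternating sum of the terms `(n choose l) / (t - i b)`. As `p < n`, the
`n`-th finite difference annihilates the polynomial `(t ^ p - (i b) ^ p) / (t - i b)` in `b`, so
each numerator `t ^ p` may be replaced by `(i b) ^ p`. When `n - p` is odd, the powers of `i`
combine so that only `Im (t - i b)⁻¹ = b / (t ^ 2 + b ^ 2)` contributes, and its integral over
`(0, ∞)` is `π / 2 * sign b`.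
-/

open MeasureTheory Real Finset

section LaplaceTransform

variable {E : Type*} [NormedAddCommGroup E] [NormedSpace ℝ E]

/-- The one-sided Laplace transform of `f`, restricted to real arguments `t` so that real- and
complex-valued functions are treated alike. It has the junk value `0` where the integral does not
converge absolutely. -/
noncomputable def laplaceTransform (f : ℝ → E) (t : ℝ) : E :=
  ∫ x in Set.Ioi (0 : ℝ), exp (-(t * x)) • f x

lemma integrableOn_pow_mul_exp_neg_mul_Ioi (p : ℕ) {x : ℝ} (hx : 0 < x) :
    IntegrableOn (fun t : ℝ ↦ t ^ p * exp (-(t * x))) (Set.Ioi 0) := by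
  simpa [mul_comm x] using integrableOn_rpow_mul_exp_neg_mul_rpow (p := 1) (s := p)
    (by linarith [p.cast_nonneg (α := ℝ)]) one_pos hx

lemma integral_pow_mul_exp_neg_mul_Ioi (p : ℕ) {x : ℝ} (hx : 0 < x) :
    ∫ t in Set.Ioi (0 : ℝ), t ^ p * exp (-(t * x)) = p.factorial * (x ^ (p + 1))⁻¹ := by
  have h := Real.integral_rpow_mul_exp_neg_mul_Ioi (a := p + 1) (by positivity) hx
  simp only [add_sub_cancel_right, rpow_natCast, Gamma_nat_eq_factorial, mul_comm x] at h
  rw [h, ← Nat.cast_succ, rpow_natCast, one_div, inv_pow, mul_comm]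

lemma integrable_prod_pow_mul_exp_neg_mul_smul {p : ℕ} {f : ℝ → E}
    (hf : IntegrableOn (fun x ↦ (x ^ (p + 1))⁻¹ • f x) (Set.Ioi 0)) :
    Integrable (fun z : ℝ × ℝ ↦ (z.2 ^ p * exp (-(z.2 * z.1))) • f z.1)
      ((volume.restrict (Set.Ioi 0)).prod (volume.restrict (Set.Ioi 0))) := by
  have hf_meas : AEStronglyMeasurable f (volume.restrict (Set.Ioi 0)) := by
    refine ((by fun_prop : Measurable fun x : ℝ ↦ x ^ (p + 1)).aestronglyMeasurable.smul
      hf.aestronglyMeasurable).congr ?_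
    filter_upwards [ae_restrict_mem measurableSet_Ioi] with x hx
    exact smul_inv_smul₀ (pow_ne_zero _ (ne_of_gt hx)) _
  have hmeas : AEStronglyMeasurable
      (fun z : ℝ × ℝ ↦ (z.2 ^ p * exp (-(z.2 * z.1))) • f z.1)
      ((volume.restrict (Set.Ioi 0)).prod (volume.restrict (Set.Ioi 0))) :=
    (by fun_prop : Continuous fun z : ℝ × ℝ ↦
      z.2 ^ p * exp (-(z.2 * z.1))).aestronglyMeasurable.smul hf_meas.comp_fst
  refine (integrable_prod_iff hmeas).2 ⟨?_, ?_⟩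
  · filter_upwards [ae_restrict_mem measurableSet_Ioi] with x hx
    exact (integrableOn_pow_mul_exp_neg_mul_Ioi p hx).smul_const (f x)
  · refine (hf.norm.const_mul (p.factorial : ℝ)).congr ?_
    filter_upwards [ae_restrict_mem measurableSet_Ioi] with x (hx : 0 < x)
    calc (p.factorial : ℝ) * ‖(x ^ (p + 1))⁻¹ • f x‖
        = (∫ t in Set.Ioi (0 : ℝ), t ^ p * exp (-(t * x))) * ‖f x‖ := by
          rw [integral_pow_mul_exp_neg_mul_Ioi p hx, norm_smul, norm_of_nonneg (by positivity),
            mul_assoc]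
      _ = ∫ t in Set.Ioi (0 : ℝ), ‖(t ^ p * exp (-(t * x))) • f x‖ := by
          rw [← integral_mul_const]
          refine setIntegral_congr_fun measurableSet_Ioi fun t (ht : 0 < t) ↦ ?_
          simp only [norm_smul, norm_of_nonneg (show 0 ≤ t ^ p * exp (-(t * x)) by positivity)]

theorem integral_inv_pow_smul_eq_integral_pow_smul_laplaceTransform [CompleteSpace E] {p : ℕ}
    {f : ℝ → E} (hf : IntegrableOn (fun x ↦ (x ^ (p + 1))⁻¹ • f x) (Set.Ioi 0)) :
    ∫ x in Set.Ioi (0 : ℝ), (x ^ (p + 1))⁻¹ • f x =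
      (p.factorial : ℝ)⁻¹ • ∫ t in Set.Ioi (0 : ℝ), t ^ p • laplaceTransform f t := by
  rw [eq_inv_smul_iff₀ (by positivity), ← integral_smul]
  calc ∫ x in Set.Ioi (0 : ℝ), (p.factorial : ℝ) • (x ^ (p + 1))⁻¹ • f x
      = ∫ x in Set.Ioi (0 : ℝ), ∫ t in Set.Ioi (0 : ℝ), (t ^ p * exp (-(t * x))) • f x := by
        refine setIntegral_congr_fun measurableSet_Ioi fun x (hx : 0 < x) ↦ ?_
        simp only [integral_smul_const]
        rw [integral_pow_mul_exp_neg_mul_Ioi p hx, mul_smul]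
    _ = ∫ t in Set.Ioi (0 : ℝ), ∫ x in Set.Ioi (0 : ℝ), (t ^ p * exp (-(t * x))) • f x :=
        integral_integral_swap (integrable_prod_pow_mul_exp_neg_mul_smul hf)
    _ = ∫ t in Set.Ioi (0 : ℝ), t ^ p • laplaceTransform f t := by
        simp only [laplaceTransform, mul_smul, integral_smul]

lemma laplaceTransform_ofReal {𝕜 : Type*} [RCLike 𝕜] (f : ℝ → ℝ) (t : ℝ) :
    laplaceTransform (fun x ↦ (f x : 𝕜)) t = ((laplaceTransform f t : ℝ) : 𝕜) := by
  simp only [laplaceTransform, ← integral_ofReal, RCLike.real_smul_eq_coe_mul, smul_eq_mul,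
    RCLike.ofReal_mul]

lemma exp_neg_mul_smul_cexp (a : ℂ) (t x : ℝ) :
    exp (-(t * x)) • Complex.exp (a * x) = Complex.exp ((a - t) * x) := by
  rw [Complex.real_smul, Complex.ofReal_exp, ← Complex.exp_add]
  congr 1
  push_cast
  ring

lemma integrableOn_exp_neg_mul_smul_cexp {a : ℂ} {t : ℝ} (ha : a.re < t) :
    IntegrableOn (fun x : ℝ ↦ exp (-(t * x)) • Complex.exp (a * x)) (Set.Ioi 0) := by
  simpa only [exp_neg_mul_smul_cexp] using
    integrableOn_exp_mul_complex_Ioi (a := a - t) (by simpa using ha) 0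

lemma laplaceTransform_cexp {a : ℂ} {t : ℝ} (ha : a.re < t) :
    laplaceTransform (fun x ↦ Complex.exp (a * x)) t = (t - a)⁻¹ := by
  simp only [laplaceTransform, exp_neg_mul_smul_cexp]
  rw [integral_exp_mul_complex_Ioi (by simpa using ha)]
  simp [neg_div, ← inv_neg]

end LaplaceTransform

section AlternatingBinomialSums

lemma sum_alternating_choose_mul_affine_pow_eq_zero {R : Type*} [CommRing R] {n j : ℕ}
    (hj : j < n) (a d : R) :
    ∑ l ∈ range (n + 1), (-1) ^ l * (n.choose l : R) * (a + d * l) ^ j = 0 := by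
  let P : Polynomial R := (Polynomial.C a + Polynomial.C d * Polynomial.X) ^ j
  have hP : P.natDegree < n := by
    refine lt_of_le_of_lt ?_ hj
    exact (Polynomial.natDegree_pow_le_of_le j (by compute_degree)).trans_eq (mul_one j)
  have hdiff := congrFun (Polynomial.fwdDiff_iter_eq_zero_of_degree_lt hP) 0
  rw [fwdDiff_iter_eq_sum_shift, Pi.zero_apply] at hdiff
  rw [← mul_zero ((-1) ^ n), ← hdiff, mul_sum]
  refine sum_congr rfl fun l hl ↦ ?_
  have hsign : (-1 : R) ^ n * (-1) ^ (n - l) = (-1) ^ l := by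
    rw [← pow_sub_mul_pow (-1 : R) (mem_range_succ_iff.1 hl), mul_right_comm, ← mul_pow]
    simp
  simp [P, ← hsign, mul_assoc]

theorem sum_alternating_choose_mul_pow_div_sub {K : Type*} [Field K] {n p : ℕ} (hp : p ≤ n)
    {s a d : K} (hs : ∀ l ∈ range (n + 1), s ≠ a + d * l) :
    ∑ l ∈ range (n + 1), (-1) ^ l * (n.choose l : K) * (s ^ p / (s - (a + d * l))) =
      ∑ l ∈ range (n + 1), (-1) ^ l * (n.choose l : K) *
        ((a + d * l) ^ p / (s - (a + d * l))) := by
  rw [← sub_eq_zero, ← sum_sub_distrib]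
  calc ∑ l ∈ range (n + 1), ((-1) ^ l * (n.choose l : K) * (s ^ p / (s - (a + d * l))) -
        (-1) ^ l * (n.choose l : K) * ((a + d * l) ^ p / (s - (a + d * l))))
      = ∑ l ∈ range (n + 1), ∑ i ∈ range p,
          s ^ i * ((-1) ^ l * (n.choose l : K) * (a + d * l) ^ (p - 1 - i)) := by
        refine sum_congr rfl fun l hl ↦ ?_
        rw [← mul_sub, ← sub_div, ← (Commute.all s (a + d * l)).geom_sum₂ (hs l hl), mul_sum]
        exact sum_congr rfl fun i _ ↦ by ring
    _ = ∑ i ∈ range p, s ^ i * ∑ l ∈ range (n + 1),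
          (-1) ^ l * (n.choose l : K) * (a + d * l) ^ (p - 1 - i) := by
        rw [sum_comm]
        simp only [mul_sum]
    _ = 0 := by
        refine sum_eq_zero fun i hi ↦ ?_
        rw [sum_alternating_choose_mul_affine_pow_eq_zero
          (by have := mem_range.1 hi; omega), mul_zero]

end AlternatingBinomialSums

section SinePowers

lemma two_I_mul_sin_pow (n : ℕ) (z : ℂ) :
    (2 * Complex.I * Complex.sin z) ^ n = ∑ l ∈ range (n + 1),
      (-1) ^ l * (n.choose l : ℂ) * Complex.exp ((n - 2 * l) * Complex.I * z) := by
  have hsin : 2 * Complex.I * Complex.sin z =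
      -Complex.exp (-z * Complex.I) + Complex.exp (z * Complex.I) := by
    rw [mul_right_comm, Complex.two_sin, mul_assoc, Complex.I_mul_I]
    ring
  rw [hsin, add_pow]
  refine sum_congr rfl fun l hl ↦ ?_
  have hexp : Complex.exp (-z * Complex.I) ^ l * Complex.exp (z * Complex.I) ^ (n - l) =
      Complex.exp ((n - 2 * l) * Complex.I * z) := by
    rw [← Complex.exp_nat_mul, ← Complex.exp_nat_mul, ← Complex.exp_add,
      Nat.cast_sub (mem_range_succ_iff.1 hl)]
    ring_nf
  rw [neg_pow, ← hexp]
  ring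

theorem two_I_pow_mul_laplaceTransform_sin_pow (n : ℕ) {t : ℝ} (ht : 0 < t) :
    (2 * Complex.I) ^ n * ((laplaceTransform (fun x ↦ sin x ^ n) t : ℝ) : ℂ) =
      ∑ l ∈ range (n + 1),
        (-1) ^ l * (n.choose l : ℂ) * (t - (n - 2 * l) * Complex.I)⁻¹ := by
  have hre (l : ℕ) : (((n : ℂ) - 2 * l) * Complex.I).re < t := by simpa using ht
  have hofReal : ((laplaceTransform (fun x ↦ sin x ^ n) t : ℝ) : ℂ) =
      laplaceTransform (fun x ↦ ((sin x ^ n : ℝ) : ℂ)) t := (laplaceTransform_ofReal _ t).symm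
  rw [hofReal]
  simp only [← laplaceTransform_cexp (hre _), laplaceTransform, ← integral_const_mul]
  rw [← integral_finsetSum _ fun l _ ↦ (integrableOn_exp_neg_mul_smul_cexp (hre l)).const_mul _]
  congr 1 with x
  simp only [mul_smul_comm, ← smul_sum, ← two_I_mul_sin_pow]
  simp [mul_pow]

lemma two_I_pow_mul_pow_mul_laplaceTransform_sin_pow {n p : ℕ} (hp : p ≤ n) {t : ℝ}
    (ht : 0 < t) :
    (2 * Complex.I) ^ n * (t ^ p * (laplaceTransform (fun x ↦ sin x ^ n) t : ℝ) : ℂ) =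
      Complex.I ^ p * ∑ l ∈ range (n + 1), (-1) ^ l * (n.choose l : ℂ) *
        (n - 2 * l) ^ p * (t - (n - 2 * l) * Complex.I)⁻¹ := by
  have hnode (l : ℕ) : (n * Complex.I + -2 * Complex.I * l : ℂ) = (n - 2 * l) * Complex.I := by ring
  have hne (l : ℕ) : (t : ℂ) ≠ n * Complex.I + -2 * Complex.I * l := by
    intro h
    simpa [hnode, ht.ne'] using congrArg Complex.re h
  have hsum := sum_alternating_choose_mul_pow_div_sub hp fun l _ ↦ hne l
  simp only [hnode] at hsum
  calc (2 * Complex.I) ^ n * (t ^ p * (laplaceTransform (fun x ↦ sin x ^ n) t : ℝ) : ℂ)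
      = ∑ l ∈ range (n + 1), (-1) ^ l * (n.choose l : ℂ) *
          ((t : ℂ) ^ p / (t - (n - 2 * l) * Complex.I)) := by
        rw [mul_left_comm, two_I_pow_mul_laplaceTransform_sin_pow n ht, mul_sum]
        exact sum_congr rfl fun l _ ↦ by ring
    _ = Complex.I ^ p * ∑ l ∈ range (n + 1), (-1) ^ l * (n.choose l : ℂ) *
          (n - 2 * l) ^ p * (t - (n - 2 * l) * Complex.I)⁻¹ := by
        rw [hsum, mul_sum]
        exact sum_congr rfl fun l _ ↦ by rw [mul_pow]; ring

lemma im_inv_sub_mul_I (t b : ℝ) : ((t - b * Complex.I : ℂ)⁻¹).im = b / (t ^ 2 + b ^ 2) := by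
  simp [Complex.inv_im, Complex.normSq_apply, sq]

theorem pow_mul_laplaceTransform_sin_pow {n p r : ℕ} (hn : n = p + 1 + 2 * r) {t : ℝ}
    (ht : 0 < t) :
    t ^ p * laplaceTransform (fun x ↦ sin x ^ n) t =
      (-1) ^ r / 2 ^ n * ∑ l ∈ range (n + 1), (-1) ^ l * (n.choose l : ℝ) *
        (n - 2 * l) ^ p * ((n - 2 * l) / (t ^ 2 + (n - 2 * l) ^ 2)) := by
  set L := laplaceTransform (fun x ↦ sin x ^ n) t
  have hcomplex : Complex.I * ((2 ^ n * (-1) ^ r * (t ^ p * L) : ℝ) : ℂ) =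
      ∑ l ∈ range (n + 1), (((-1) ^ l * (n.choose l : ℝ) * (n - 2 * l) ^ p : ℝ) : ℂ) *
        (t - ((n - 2 * l : ℝ) : ℂ) * Complex.I)⁻¹ := by
    have hI : Complex.I ^ n = Complex.I ^ p * (Complex.I * (-1) ^ r) := by
      rw [hn, pow_add, pow_succ, pow_mul, Complex.I_sq, mul_assoc]
    refine mul_left_cancel₀ (pow_ne_zero p Complex.I_ne_zero) ?_
    push_cast
    rw [← two_I_pow_mul_pow_mul_laplaceTransform_sin_pow (by omega) ht, mul_pow, hI]
    ring
  have him := congrArg Complex.im hcomplex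
  simp only [Complex.I_mul_im, Complex.ofReal_re, Complex.im_sum, Complex.im_ofReal_mul,
    im_inv_sub_mul_I] at him
  rw [← him, div_mul_eq_mul_div, eq_div_iff (by positivity)]
  have hsign : (-1 : ℝ) ^ r * (-1) ^ r = 1 := by simp [← mul_pow]
  linear_combination (-(2 ^ n * (t ^ p * L))) * hsign

lemma integrableOn_sin_pow_div_pow {m n : ℕ} (hm : 2 ≤ m) (hmn : m ≤ n) :
    IntegrableOn (fun x ↦ sin x ^ n / x ^ m) (Set.Ioi 0) := by
  refine (integrable_inv_one_add_sq.const_mul 2).integrableOn.mono'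
    (by fun_prop : Measurable fun x ↦ sin x ^ n / x ^ m).aestronglyMeasurable ?_
  filter_upwards [ae_restrict_mem measurableSet_Ioi] with x (hx : 0 < x)
  have hquot : |sin x| / x ≤ 1 :=
    (div_le_one hx).2 (abs_sin_le_abs.trans_eq (abs_of_pos hx))
  calc ‖sin x ^ n / x ^ m‖ = |sin x| ^ n / x ^ m := by
        rw [norm_eq_abs, abs_div, abs_pow, abs_of_pos (pow_pos hx m)]
    _ ≤ |sin x| ^ m / x ^ m := by
        gcongr ?_ / _
        exact pow_le_pow_of_le_one (abs_nonneg _) (abs_sin_le_one x) hmn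
    _ = (|sin x| / x) ^ m := (div_pow ..).symm
    _ ≤ (|sin x| / x) ^ 2 := pow_le_pow_of_le_one (by positivity) hquot hm
    _ ≤ 2 * (1 + x ^ 2)⁻¹ := by
        rw [div_pow, sq_abs, ← div_eq_mul_inv, div_le_div_iff₀ (by positivity) (by positivity)]
        nlinarith [sin_sq_le_one x, sin_sq_le_sq (x := x), sq_nonneg x]

end SinePowers

section PoissonKernel

lemma div_sq_add_sq_eq_inv_mul (b t : ℝ) :
    b / (t ^ 2 + b ^ 2) = b⁻¹ * (1 + (b⁻¹ * t) ^ 2)⁻¹ := by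
  rcases eq_or_ne b 0 with rfl | hb
  · simp
  · field_simp
    ring

lemma integrable_div_sq_add_sq (b : ℝ) : Integrable fun t : ℝ ↦ b / (t ^ 2 + b ^ 2) := by
  rcases eq_or_ne b 0 with rfl | hb
  · simp
  · simp only [div_sq_add_sq_eq_inv_mul]
    exact (integrable_inv_one_add_sq.comp_mul_left' (inv_ne_zero hb)).const_mul _

lemma integral_Ioi_div_sq_add_sq (b : ℝ) :
    ∫ t in Set.Ioi (0 : ℝ), b / (t ^ 2 + b ^ 2) = π / 2 * sign b := by
  have hpos {c : ℝ} (hc : 0 < c) : ∫ t in Set.Ioi (0 : ℝ), c / (t ^ 2 + c ^ 2) = π / 2 := by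
    simp only [div_sq_add_sq_eq_inv_mul]
    rw [integral_const_mul,
      integral_comp_mul_left_Ioi (fun t : ℝ ↦ (1 + t ^ 2)⁻¹) 0 (inv_pos.2 hc)]
    simp [hc.ne']
  rcases lt_trichotomy b 0 with hb | rfl | hb
  · have h := hpos (neg_pos.2 hb)
    simp only [neg_sq, neg_div, integral_neg] at h
    rw [sign_of_neg hb]
    linarith
  · simp
  · rw [hpos hb, sign_of_pos hb, mul_one]

end PoissonKernel

theorem integral_Ioi_sin_pow_div_pow {n p r : ℕ} (hp : 1 ≤ p) (hn : n = p + 1 + 2 * r) :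
    ∫ x in Set.Ioi (0 : ℝ), sin x ^ n / x ^ (p + 1) =
      (-1) ^ r * π / (2 ^ (n + 1) * p.factorial) * ∑ l ∈ range (n + 1),
        (-1) ^ l * (n.choose l : ℝ) * (n - 2 * l) ^ p * sign (n - 2 * l : ℝ) := by
  have hint : IntegrableOn (fun x ↦ (x ^ (p + 1))⁻¹ • sin x ^ n) (Set.Ioi 0) := by
    simpa only [smul_eq_mul, inv_mul_eq_div] using
      integrableOn_sin_pow_div_pow (show 2 ≤ p + 1 by omega) (show p + 1 ≤ n by omega)
  calc ∫ x in Set.Ioi (0 : ℝ), sin x ^ n / x ^ (p + 1)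
      = (p.factorial : ℝ)⁻¹ *
          ∫ t in Set.Ioi (0 : ℝ), t ^ p * laplaceTransform (fun x ↦ sin x ^ n) t := by
        simpa only [smul_eq_mul, inv_mul_eq_div (_ ^ (p + 1))] using
          integral_inv_pow_smul_eq_integral_pow_smul_laplaceTransform hint
    _ = (p.factorial : ℝ)⁻¹ * ∫ t in Set.Ioi (0 : ℝ), (-1) ^ r / 2 ^ n * ∑ l ∈ range (n + 1),
          (-1) ^ l * (n.choose l : ℝ) * (n - 2 * l) ^ p *
            ((n - 2 * l) / (t ^ 2 + (n - 2 * l) ^ 2)) := by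
        congr 1
        exact setIntegral_congr_fun measurableSet_Ioi fun t ht ↦
          pow_mul_laplaceTransform_sin_pow hn ht
    _ = (p.factorial : ℝ)⁻¹ * ((-1) ^ r / 2 ^ n * ∑ l ∈ range (n + 1),
          (-1) ^ l * (n.choose l : ℝ) * (n - 2 * l) ^ p * (π / 2 * sign (n - 2 * l : ℝ))) := by
        rw [integral_const_mul, integral_finsetSum _ fun l _ ↦
          (integrable_div_sq_add_sq _).integrableOn.const_mul _]
        simp only [integral_const_mul, integral_Ioi_div_sq_add_sq]
    _ = (-1) ^ r * π / (2 ^ (n + 1) * p.factorial) * ∑ l ∈ range (n + 1),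
          (-1) ^ l * (n.choose l : ℝ) * (n - 2 * l) ^ p * sign (n - 2 * l : ℝ) := by
        simp only [mul_sum]
        exact sum_congr rfl fun l _ ↦ by rw [pow_succ 2 n]; field_simp

theorem stmt_2 (n m : ℕ) (hm : 2 ≤ m) (hmn : m ≤ n) (hpar : Even (n - m)) :
    ∫ x in Set.Ioi (0 : ℝ), Real.sin x ^ n / x ^ m =
      -((-1 : ℝ) ^ (((m : ℤ) - n) / 2)) * Real.pi /
          (2 ^ (n + 1) * (Nat.factorial (m - 1))) *
        ∑ l ∈ (Finset.range (n + 1)).filter (fun l => 2 * l ≠ n),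
          (-1 : ℝ) ^ l * (n.choose l : ℝ) * ((n : ℝ) - 2 * l) ^ (m - 1) *
            Real.sign (2 * (l : ℝ) - n) := by
  obtain ⟨r, hr⟩ := hpar
  obtain ⟨p, rfl⟩ : ∃ p, m = p + 1 := Nat.exists_eq_add_of_le' (by omega)
  have hsign : (-1 : ℝ) ^ ((((p + 1 : ℕ) : ℤ) - n) / 2) = (-1) ^ r := by
    rw [show (((p + 1 : ℕ) : ℤ) - n) / 2 = -(r : ℤ) by omega, zpow_neg, zpow_natCast, ← inv_pow,
      inv_neg_one]
  have hmiddle (l : ℕ) (h : 2 * l = n) : sign (2 * (l : ℝ) - n) = 0 := by simp [← h]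
  rw [integral_Ioi_sin_pow_div_pow (by omega : 1 ≤ p) (by omega : n = p + 1 + 2 * r), hsign,
    sum_filter_of_ne (p := fun l ↦ 2 * l ≠ n) fun l _ hl h ↦ hl (by rw [hmiddle l h, mul_zero]),
    Nat.add_sub_cancel]
  simp only [← neg_sub (n : ℝ), Real.sign_neg, mul_neg, sum_neg_distrib, neg_mul, neg_div, neg_neg]
end

section
/- For every real β > 0 and every real k ≠ 0, the alternating series ∑_{n=1}^{∞} (−1)^n/(β²n² + k²) converges and 2k · ∑_{n=1}^{∞} (−1)^n/(β²n² + k²) = π/(β · sinh(πk/β)) − 1/k. -/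
open Real

/-!
Subtracting the Mittag-Leffler expansion `π cot (πx) = 1/x + ∑ 2x/(x² - n²)` from the same expansion
at `x/2`, whose terms are twice the even-indexed ones at `x`, flips the sign of the odd-indexed
terms. As `cot (πx/2) - cot (πx) = 1/sin (πx)`, this gives
`∑ (-1)ⁿ · 2x/(x² - n²) = π/sin (πx) - 1/x`, and the hyperbolic sine appears at `x = ik/β`.
-/

theorem cot_sub_cot_two_mul (z : ℂ) :
    Complex.cot z - Complex.cot (2 * z) = 1 / Complex.sin (2 * z) := by
  rw [Complex.cot_eq_cos_div_sin, Complex.cot_eq_cos_div_sin, Complex.cos_two_mul,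
    Complex.sin_two_mul]
  rcases eq_or_ne (Complex.sin z) 0 with hsin | hsin
  · simp [hsin]
  rcases eq_or_ne (Complex.cos z) 0 with hcos | hcos
  · simp [hcos]
  field_simp
  ring

theorem hasSum_neg_one_pow_succ_mul_of_hasSum_odd {R : Type*} [Ring R] [TopologicalSpace R]
    [IsTopologicalAddGroup R] {f : ℕ → R} {a b : R} (hf : HasSum f a)
    (hodd : HasSum (fun n ↦ f (2 * n + 1)) b) :
    HasSum (fun n ↦ (-1) ^ (n + 1) * f n) (2 * b - a) := by
  let g : ℕ → R := fun n ↦ (1 + (-1) ^ (n + 1)) * f n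
  have g_even : HasSum (fun n ↦ g (2 * n)) 0 := by
    simp [g, pow_succ, hasSum_zero]
  have g_odd : HasSum (fun n ↦ g (2 * n + 1)) (2 * b) := by
    simpa [g, pow_succ, one_add_one_eq_two, two_mul, add_mul] using hodd.add hodd
  convert! (g_even.even_add_odd g_odd).sub hf using 1
  · ext n
    simp only [g]
    noncomm_ring
  · rw [zero_add]

theorem div_two_mem_integerComplement {x : ℂ} (hx : x ∈ Complex.integerComplement) :
    x / 2 ∈ Complex.integerComplement := by
  rintro ⟨n, hn⟩
  refine hx ⟨2 * n, ?_⟩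
  push_cast
  rw [hn]
  ring

theorem ofReal_mul_I_mem_integerComplement {y : ℝ} (hy : y ≠ 0) :
    y * Complex.I ∈ Complex.integerComplement := by
  rintro ⟨n, hn⟩
  have him := congrArg Complex.im hn
  simp only [Complex.intCast_im, Complex.im_ofReal_mul, Complex.I_im, mul_one] at him
  exact hy him.symm

-- `cotTerm x n` is the term of index `n + 1`, so the positions `2 * n + 1` carry the even indices.
theorem cotTerm_div_two (x : ℂ) (n : ℕ) :
    cotTerm (x / 2) n = 2 * cotTerm x (2 * n + 1) := by
  have hsub : x / 2 - (n + 1) = (x - (2 * n + 1 + 1)) / 2 := by ring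
  have hadd : x / 2 + (n + 1) = (x + (2 * n + 1 + 1)) / 2 := by ring
  simp only [cotTerm, hsub, hadd]
  push_cast
  simp only [one_div_div]
  ring

theorem hasSum_cotTerm {x : ℂ} (hx : x ∈ Complex.integerComplement) :
    HasSum (cotTerm x) (π * Complex.cot (π * x) - 1 / x) := by
  rw [cot_series_rep' hx]
  exact (summable_cotTerm hx).hasSum

theorem hasSum_neg_one_pow_succ_mul_cotTerm {x : ℂ} (hx : x ∈ Complex.integerComplement) :
    HasSum (fun n ↦ (-1) ^ (n + 1) * cotTerm x n) (π / Complex.sin (π * x) - 1 / x) := by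
  have odd_terms : HasSum (fun n ↦ cotTerm x (2 * n + 1))
      ((π * Complex.cot (π * (x / 2)) - 1 / (x / 2)) / 2) := by
    simpa [cotTerm_div_two] using
      (hasSum_cotTerm (div_two_mem_integerComplement hx)).div_const 2
  have hcot := cot_sub_cot_two_mul (π * (x / 2))
  rw [show 2 * (π * (x / 2)) = π * x by ring] at hcot
  convert! hasSum_neg_one_pow_succ_mul_of_hasSum_odd (hasSum_cotTerm hx) odd_terms using 1
  rw [one_div_div]
  linear_combination (-π : ℂ) * hcot

theorem hasSum_neg_one_pow_succ_div_sq_sub_sq {x : ℂ} (hx : x ∈ Complex.integerComplement) :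
    HasSum (fun n : ℕ ↦ (-1) ^ (n + 1) / (x ^ 2 - (n + 1) ^ 2))
      ((π / Complex.sin (π * x) - 1 / x) / (2 * x)) := by
  have hx0 : x ≠ 0 := Complex.integerComplement.ne_zero hx
  refine ((hasSum_neg_one_pow_succ_mul_cotTerm hx).div_const (2 * x)).congr_fun fun n ↦ ?_
  rw [cotTerm_identity hx, ← sq_sub_sq]
  field_simp

theorem hasSum_neg_one_pow_succ_div_mul_sq_add_sq {β k : ℂ}
    (h : k / β * Complex.I ∈ Complex.integerComplement) :
    HasSum (fun n : ℕ ↦ (-1 : ℂ) ^ (n + 1) / (β ^ 2 * ((n : ℂ) + 1) ^ 2 + k ^ 2))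
      ((π / (β * Complex.sinh (π * k / β)) - 1 / k) / (2 * k)) := by
  obtain ⟨hk, hβ⟩ : k ≠ 0 ∧ β ≠ 0 := by
    simpa using Complex.integerComplement.ne_zero h
  convert! (hasSum_neg_one_pow_succ_div_sq_sub_sq h).div_const (-β ^ 2) using 1
  · ext n
    have denominator_eq : ((k / β * Complex.I) ^ 2 - (n + 1) ^ 2) * -β ^ 2 =
        β ^ 2 * (n + 1) ^ 2 + k ^ 2 := by
      rw [mul_pow, Complex.I_sq]
      field_simp
      ring
    rw [div_div, denominator_eq]
  · rw [← mul_assoc, ← mul_div_assoc, Complex.sin_mul_I]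
    field_simp
    rw [Complex.I_sq]
    ring

theorem stmt_5_general (β k : ℂ) (h : k / β * Complex.I ∈ Complex.integerComplement) :
    (Summable fun n : ℕ ↦ (-1 : ℂ) ^ (n + 1) / (β ^ 2 * ((n : ℂ) + 1) ^ 2 + k ^ 2)) ∧
    2 * k * (∑' n : ℕ, (-1 : ℂ) ^ (n + 1) / (β ^ 2 * ((n : ℂ) + 1) ^ 2 + k ^ 2)) =
      π / (β * Complex.sinh (π * k / β)) - 1 / k := by
  have hsum := hasSum_neg_one_pow_succ_div_mul_sq_add_sq h
  have hk : k ≠ 0 := by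
    rintro rfl
    simpa using Complex.integerComplement.ne_zero h
  exact ⟨hsum.summable, by rw [hsum.tsum_eq, mul_div_cancel₀ _ (mul_ne_zero two_ne_zero hk)]⟩

theorem stmt_5 (β k : ℝ) (hβ : 0 < β) (hk : k ≠ 0) :
    (Summable fun n : ℕ => (-1 : ℝ) ^ (n + 1) / (β ^ 2 * ((n : ℝ) + 1) ^ 2 + k ^ 2)) ∧
    2 * k * (∑' n : ℕ, (-1 : ℝ) ^ (n + 1) / (β ^ 2 * ((n : ℝ) + 1) ^ 2 + k ^ 2)) =
      Real.pi / (β * Real.sinh (Real.pi * k / β)) - 1 / k := by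
  have h := ofReal_mul_I_mem_integerComplement (div_ne_zero hk hβ.ne')
  exact_mod_cast stmt_5_general β k (by exact_mod_cast h)
end

section
/- Let β > 0 and let k be a nonzero real number. Then the Abel-regularized Fourier transform of the Fermi–Dirac function exists and equals lim_{ε→0⁺} ∫_ℝ e^{−ikx} · e^{−ε|x|} / (1 + e^{βx}) dx = iπ/(β · sinh(πk/β)), an equality of complex numbers. -/
open MeasureTheory Real Complex Filter Topology

/-!
The substitution `t = 1 / (1 + e^(-x))` turns Euler's Beta integral into
`∫ e^(ux) / (1 + e^x)^(u+v) dx`. For `u + v = 1`, the reflection formula evaluates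
`∫ e^(ux) / (1 + e^(βx)) dx` as `π / (β sin (πu/β))` on the strip `0 < Re u < β`.
The Fourier integral sits at `u = -ik`, on the boundary of this strip. The regularizing factor
`e^(-ε|x|)` can be traded for `e^(εx)`, which moves `u` to `u + ε` inside the strip: the two factors
agree for `x ≤ 0`, while for `x ≥ 0` the Fermi–Dirac function decays exponentially, so by dominated
convergence the difference disappears as `ε → 0⁺`. It remains to let `u + ε → u` in the closed form.
-/

section AbelRegularization

variable {E : Type*} [NormedAddCommGroup E] [NormedSpace ℝ E] {μ : Measure ℝ} {g : ℝ → E}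
  {ε δ : ℝ}

lemma abs_exp_neg_mul_abs_sub_exp_mul_le (hε : 0 ≤ ε) (hεδ : ε ≤ δ) (x : ℝ) :
    |Real.exp (-ε * |x|) - Real.exp (ε * x)| ≤ Real.exp (δ * x) := by
  rcases le_total x 0 with hx | hx
  · simp [abs_of_nonpos hx, Real.exp_nonneg]
  · have decay_le_growth : Real.exp (-ε * |x|) ≤ Real.exp (ε * x) := by
      rw [abs_of_nonneg hx]
      gcongr
      linarith
    calc |Real.exp (-ε * |x|) - Real.exp (ε * x)|
        = Real.exp (ε * x) - Real.exp (-ε * |x|) := by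
          rw [abs_sub_comm, abs_of_nonneg (sub_nonneg.2 decay_le_growth)]
      _ ≤ Real.exp (ε * x) := sub_le_self _ (Real.exp_nonneg _)
      _ ≤ Real.exp (δ * x) := by gcongr

lemma norm_exp_neg_mul_abs_sub_exp_mul_smul_le (hε : 0 ≤ ε) (hεδ : ε ≤ δ) (g : ℝ → E) (x : ℝ) :
    ‖(Real.exp (-ε * |x|) - Real.exp (ε * x)) • g x‖ ≤ ‖Real.exp (δ * x) • g x‖ := by
  rw [norm_smul, norm_smul, Real.norm_eq_abs, Real.norm_of_nonneg (Real.exp_nonneg _)]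
  gcongr
  exact abs_exp_neg_mul_abs_sub_exp_mul_le hε hεδ x

lemma aestronglyMeasurable_of_exp_mul_smul
    (hg : AEStronglyMeasurable (fun x => Real.exp (δ * x) • g x) μ) :
    AEStronglyMeasurable g μ := by
  have h : AEStronglyMeasurable (fun x => Real.exp (-(δ * x)) • Real.exp (δ * x) • g x) μ :=
    AEStronglyMeasurable.smul (by fun_prop) hg
  simpa only [smul_smul, ← Real.exp_add, neg_add_cancel, Real.exp_zero, one_smul] using h

lemma integrable_exp_neg_mul_abs_sub_exp_mul_smul (hε : 0 ≤ ε) (hεδ : ε ≤ δ)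
    (hg : Integrable (fun x => Real.exp (δ * x) • g x) μ) :
    Integrable (fun x => (Real.exp (-ε * |x|) - Real.exp (ε * x)) • g x) μ :=
  hg.mono
    (.smul (by fun_prop) (aestronglyMeasurable_of_exp_mul_smul hg.aestronglyMeasurable))
    (.of_forall (norm_exp_neg_mul_abs_sub_exp_mul_smul_le hε hεδ g))

lemma tendsto_integral_exp_neg_mul_abs_sub_exp_mul_smul (hδ : 0 < δ)
    (hg : Integrable (fun x => Real.exp (δ * x) • g x) μ) :
    Tendsto (fun ε : ℝ => ∫ x, (Real.exp (-ε * |x|) - Real.exp (ε * x)) • g x ∂μ)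
      (𝓝[>] 0) (𝓝 0) := by
  have small : ∀ᶠ ε : ℝ in 𝓝[>] 0, ε ∈ Set.Ioc 0 δ := Ioc_mem_nhdsGT hδ
  have pointwise (x : ℝ) :
      Tendsto (fun ε : ℝ => (Real.exp (-ε * |x|) - Real.exp (ε * x)) • g x) (𝓝[>] 0) (𝓝 0) := by
    have hc : Continuous fun ε : ℝ => (Real.exp (-ε * |x|) - Real.exp (ε * x)) • g x := by
      fun_prop
    simpa using (hc.tendsto 0).mono_left nhdsWithin_le_nhds
  simpa using tendsto_integral_filter_of_dominated_convergence
    (fun x => ‖Real.exp (δ * x) • g x‖)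
    (small.mono fun ε hε =>
      (integrable_exp_neg_mul_abs_sub_exp_mul_smul hε.1.le hε.2 hg).aestronglyMeasurable)
    (small.mono fun ε hε =>
      .of_forall (norm_exp_neg_mul_abs_sub_exp_mul_smul_le hε.1.le hε.2 g))
    hg.norm (.of_forall pointwise)

lemma tendsto_integral_exp_neg_mul_abs_smul_of_exp_mul {L : E}
    (hg : ∀ᶠ ε : ℝ in 𝓝[>] 0, Integrable (fun x => Real.exp (ε * x) • g x) μ)
    (hL : Tendsto (fun ε : ℝ => ∫ x, Real.exp (ε * x) • g x ∂μ) (𝓝[>] 0) (𝓝 L)) :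
    Tendsto (fun ε : ℝ => ∫ x, Real.exp (-ε * |x|) • g x ∂μ) (𝓝[>] 0) (𝓝 L) := by
  obtain ⟨δ, hgδ, hδ : 0 < δ⟩ := (hg.and self_mem_nhdsWithin).exists
  rw [← add_zero L]
  refine (hL.add (tendsto_integral_exp_neg_mul_abs_sub_exp_mul_smul hδ hgδ)).congr' ?_
  filter_upwards [hg, Ioc_mem_nhdsGT hδ] with ε hgε hε
  rw [← integral_add hgε (integrable_exp_neg_mul_abs_sub_exp_mul_smul hε.1.le hε.2 hgδ)]
  simp only [← add_smul, add_sub_cancel]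

end AbelRegularization

section BetaIntegral

lemma sigmoid_eq_exp_div_one_add_exp (x : ℝ) :
    Real.sigmoid x = Real.exp x / (1 + Real.exp x) := by
  rw [Real.sigmoid_def, Real.exp_neg]
  field_simp
  ring

lemma one_sub_sigmoid_eq_inv_one_add_exp (x : ℝ) :
    1 - Real.sigmoid x = (1 + Real.exp x)⁻¹ := by
  rw [← Real.sigmoid_neg, Real.sigmoid_def, neg_neg]

lemma ofReal_exp_cpow (x : ℝ) (u : ℂ) : (Real.exp x : ℂ) ^ u = Complex.exp (u * x) := by
  rw [Complex.cpow_def_of_ne_zero (mod_cast (Real.exp_pos x).ne'),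
    ← Complex.ofReal_log (Real.exp_pos x).le, Real.log_exp, mul_comm]

lemma sigmoid_cpow_mul_one_sub_sigmoid_cpow (u v : ℂ) (x : ℝ) :
    (Real.sigmoid x : ℂ) ^ u * (1 - Real.sigmoid x : ℂ) ^ v =
      Complex.exp (u * x) / (1 + Real.exp x) ^ (u + v) := by
  have hc : 0 < 1 + Real.exp x := by positivity
  have hc' : (1 + Real.exp x : ℂ) ≠ 0 := mod_cast hc.ne'
  have h₁ : (Real.sigmoid x : ℂ) ^ u = Complex.exp (u * x) / (1 + Real.exp x) ^ u := by
    rw [sigmoid_eq_exp_div_one_add_exp, Complex.ofReal_div,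
      Complex.div_cpow_ofReal_nonneg (Real.exp_nonneg x) hc.le, ofReal_exp_cpow,
      Complex.ofReal_add, Complex.ofReal_one]
  have h₂ : (1 - Real.sigmoid x : ℂ) ^ v = ((1 + Real.exp x : ℂ) ^ v)⁻¹ := by
    rw [← Complex.ofReal_one, ← Complex.ofReal_sub, one_sub_sigmoid_eq_inv_one_add_exp,
      Complex.ofReal_inv, Complex.inv_cpow_ofReal_nonneg hc.le, Complex.ofReal_add,
      Complex.ofReal_one]
  rw [h₁, h₂, Complex.cpow_add _ _ hc', ← div_eq_mul_inv, div_div]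

lemma abs_deriv_sigmoid_smul_betaIntegrand (u v : ℂ) (x : ℝ) :
    |Real.sigmoid x * (1 - Real.sigmoid x)| •
        ((Real.sigmoid x : ℂ) ^ (u - 1) * (1 - Real.sigmoid x : ℂ) ^ (v - 1)) =
      Complex.exp (u * x) / (1 + Real.exp x) ^ (u + v) := by
  have hs : 0 < Real.sigmoid x := Real.sigmoid_pos x
  have hs' : 0 < 1 - Real.sigmoid x := sub_pos.2 (Real.sigmoid_lt_one x)
  have hsC : (Real.sigmoid x : ℂ) ≠ 0 := mod_cast hs.ne'
  have hsC' : (1 - Real.sigmoid x : ℂ) ≠ 0 := mod_cast hs'.ne'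
  rw [← sigmoid_cpow_mul_one_sub_sigmoid_cpow, abs_of_pos (mul_pos hs hs'), Complex.real_smul,
    Complex.cpow_sub _ _ hsC, Complex.cpow_sub _ _ hsC', Complex.cpow_one, Complex.cpow_one]
  push_cast
  field_simp

lemma sigmoid_image_univ : Real.sigmoid '' Set.univ = Set.Ioo 0 1 := by
  rw [Set.image_univ, Real.range_sigmoid]

lemma integrable_exp_mul_div_one_add_exp_cpow {u v : ℂ} (hu : 0 < u.re) (hv : 0 < v.re) :
    Integrable fun x : ℝ => Complex.exp (u * x) / (1 + Real.exp x) ^ (u + v) := by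
  have h := Complex.betaIntegral_convergent hu hv
  rw [intervalIntegrable_iff_integrableOn_Ioo_of_le zero_le_one, ← sigmoid_image_univ,
    integrableOn_image_iff_integrableOn_abs_deriv_smul MeasurableSet.univ
      (fun x _ => (Real.hasDerivAt_sigmoid x).hasDerivWithinAt)
      Real.sigmoid_injective.injOn, integrableOn_univ] at h
  simpa only [abs_deriv_sigmoid_smul_betaIntegrand] using h

lemma integral_exp_mul_div_one_add_exp_cpow (u v : ℂ) :
    ∫ x : ℝ, Complex.exp (u * x) / (1 + Real.exp x) ^ (u + v) = Complex.betaIntegral u v := by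
  rw [Complex.betaIntegral, intervalIntegral.integral_of_le zero_le_one,
    integral_Ioc_eq_integral_Ioo, ← sigmoid_image_univ,
    integral_image_eq_integral_abs_deriv_smul MeasurableSet.univ
      (fun x _ => (Real.hasDerivAt_sigmoid x).hasDerivWithinAt)
      Real.sigmoid_injective.injOn, setIntegral_univ]
  simp only [abs_deriv_sigmoid_smul_betaIntegrand]

lemma betaIntegral_one_sub {u : ℂ} (hu₀ : 0 < u.re) (hu₁ : u.re < 1) :
    Complex.betaIntegral u (1 - u) = π / Complex.sin (π * u) := by
  rw [Complex.betaIntegral_eq_Gamma_mul_div u (1 - u) hu₀ (by simpa using hu₁),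
    add_sub_cancel, Complex.Gamma_one, div_one, Complex.Gamma_mul_Gamma_one_sub]

end BetaIntegral

section FermiDirac

variable {β : ℝ} {u : ℂ}

lemma exp_mul_div_one_add_exp_mul_eq_comp_mul (hβ : β ≠ 0) (u : ℂ) (x : ℝ) :
    Complex.exp (u * x) / (1 + Real.exp (β * x)) =
      Complex.exp (u / β * (β * x : ℝ)) / (1 + Real.exp (β * x)) ^ (u / β + (1 - u / β)) := by
  have hβ' : (β : ℂ) ≠ 0 := mod_cast hβ
  rw [add_sub_cancel, Complex.cpow_one, Complex.ofReal_mul, ← mul_assoc, div_mul_cancel₀ _ hβ']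

lemma re_div_ofReal_mem_Ioo (hβ : 0 < β) (hu : u.re ∈ Set.Ioo 0 β) :
    (u / β).re ∈ Set.Ioo 0 1 := by
  rw [Complex.div_ofReal_re]
  exact ⟨div_pos hu.1 hβ, (div_lt_one hβ).2 hu.2⟩

lemma integrable_exp_mul_div_one_add_exp_mul (hβ : 0 < β) (hu : u.re ∈ Set.Ioo 0 β) :
    Integrable fun x : ℝ => Complex.exp (u * x) / (1 + Real.exp (β * x)) := by
  obtain ⟨h₀, h₁⟩ := re_div_ofReal_mem_Ioo hβ hu
  have h := integrable_exp_mul_div_one_add_exp_cpow h₀ (v := 1 - u / β) (by simpa using h₁)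
  simpa only [exp_mul_div_one_add_exp_mul_eq_comp_mul hβ.ne' u] using h.comp_mul_left' hβ.ne'

lemma integral_exp_mul_div_one_add_exp_mul (hβ : 0 < β) (hu : u.re ∈ Set.Ioo 0 β) :
    ∫ x : ℝ, Complex.exp (u * x) / (1 + Real.exp (β * x)) =
      π / (β * Complex.sin (π * (u / β))) := by
  obtain ⟨h₀, h₁⟩ := re_div_ofReal_mem_Ioo hβ hu
  simp only [exp_mul_div_one_add_exp_mul_eq_comp_mul hβ.ne' u]
  rw [Measure.integral_comp_mul_left (fun y : ℝ =>
      Complex.exp (u / β * y) / (1 + Real.exp y) ^ (u / β + (1 - u / β))),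
    integral_exp_mul_div_one_add_exp_cpow, betaIntegral_one_sub h₀ h₁,
    abs_of_pos (inv_pos.2 hβ), Complex.real_smul, Complex.ofReal_inv, inv_mul_eq_div, div_div,
    mul_comm (β : ℂ)]

lemma mem_integerComplement_of_re_mem_Ico {z : ℂ} (hz : z ≠ 0) (hz_re : z.re ∈ Set.Ico 0 1) :
    z ∈ Complex.integerComplement := by
  rintro ⟨n, rfl⟩
  rw [Complex.intCast_re] at hz_re
  have hn₀ : 0 ≤ n := mod_cast hz_re.1
  have hn₁ : n < 1 := mod_cast hz_re.2
  exact hz (mod_cast (by lia : n = 0))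

lemma tendsto_integral_exp_neg_mul_abs_smul_exp_mul_div_one_add_exp_mul
    (hu : u ≠ 0) (hu₀ : 0 ≤ u.re) (huβ : u.re < β) :
    Tendsto
      (fun ε : ℝ => ∫ x : ℝ,
        Real.exp (-ε * |x|) • (Complex.exp (u * x) / (1 + Real.exp (β * x))))
      (𝓝[>] 0) (𝓝 (π / (β * Complex.sin (π * (u / β))))) := by
  have hβ : 0 < β := hu₀.trans_lt huβ
  have hβ' : (β : ℂ) ≠ 0 := mod_cast hβ.ne'
  have shift (ε x : ℝ) : Real.exp (ε * x) • (Complex.exp (u * x) / (1 + Real.exp (β * x))) =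
      Complex.exp ((u + ε) * x) / (1 + Real.exp (β * x)) := by
    rw [Complex.real_smul, Complex.ofReal_exp, mul_div_assoc', ← Complex.exp_add, add_comm u,
      add_mul, Complex.ofReal_mul]
  have strip : ∀ᶠ ε : ℝ in 𝓝[>] 0, (u + ε).re ∈ Set.Ioo 0 β := by
    filter_upwards [Ioo_mem_nhdsGT (sub_pos.2 huβ)] with ε hε
    rw [Complex.add_re, Complex.ofReal_re]
    exact ⟨add_pos_of_nonneg_of_pos hu₀ hε.1, lt_sub_iff_add_lt'.1 hε.2⟩
  have hsin : Complex.sin (π * (u / β)) ≠ 0 := by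
    refine sin_pi_mul_ne_zero (mem_integerComplement_of_re_mem_Ico (div_ne_zero hu hβ') ?_)
    rw [Complex.div_ofReal_re]
    exact ⟨div_nonneg hu₀ hβ.le, (div_lt_one hβ).2 huβ⟩
  have closed_form : ContinuousAt
      (fun ε : ℝ => (π : ℂ) / (β * Complex.sin (π * ((u + ε) / β)))) 0 :=
    ContinuousAt.div (by fun_prop) (by fun_prop) (by simpa using ⟨hβ.ne', hsin⟩)
  apply tendsto_integral_exp_neg_mul_abs_smul_of_exp_mul <;> simp only [shift]
  · exact strip.mono fun ε hε => integrable_exp_mul_div_one_add_exp_mul hβ hε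
  · have h := closed_form.tendsto.mono_left (nhdsWithin_le_nhds (s := Set.Ioi 0))
    rw [Complex.ofReal_zero, add_zero] at h
    exact h.congr' (strip.mono fun ε hε => (integral_exp_mul_div_one_add_exp_mul hβ hε).symm)

end FermiDirac

lemma div_mul_sin_neg_I_mul (a b z : ℂ) :
    a / (b * Complex.sin (-I * z)) = I * a / (b * Complex.sinh z) := by
  rw [neg_mul, mul_comm I z, Complex.sin_neg, Complex.sin_mul_I]
  simp only [div_eq_mul_inv, mul_inv, inv_neg, Complex.inv_I]
  ring

theorem stmt_7_general {β : ℝ} {k : ℂ} (hk : k ≠ 0) (hk₀ : 0 ≤ k.im) (hkβ : k.im < β) :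
    Tendsto
      (fun ε : ℝ => ∫ x : ℝ,
        Complex.exp (-I * k * x) * Real.exp (-ε * |x|) / (1 + Real.exp (β * x)))
      (𝓝[>] 0) (𝓝 (I * π / (β * Complex.sinh (π * k / β)))) := by
  have h := tendsto_integral_exp_neg_mul_abs_smul_exp_mul_div_one_add_exp_mul (u := -I * k)
    (mul_ne_zero (neg_ne_zero.2 I_ne_zero) hk) (by simpa using hk₀) (by simpa using hkβ)
  rw [show π * (-I * k / β) = -I * (π * k / β) by ring, div_mul_sin_neg_I_mul] at h
  simpa only [Complex.real_smul, mul_div_assoc', mul_comm (Complex.exp _)] using h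

theorem stmt_7 (β k : ℝ) (hβ : 0 < β) (hk : k ≠ 0) :
    Filter.Tendsto
      (fun ε : ℝ => ∫ x : ℝ,
        Complex.exp (-Complex.I * k * x) * Real.exp (-ε * |x|) / (1 + Real.exp (β * x)))
      (nhdsWithin 0 (Set.Ioi 0))
      (nhds (Complex.I * Real.pi / (β * Real.sinh (Real.pi * k / β)))) := by
  simpa using stmt_7_general (β := β) (k := k) (mod_cast hk) (by simp) (by simpa using hβ)
end

section
/- Let β > 0 and let φ : ℝ → ℂ be a Schwartz function, and set φ̂(x) = ∫_ℝ φ(k) e^{−ikx} dk. Then ∫_ℝ φ̂(x)/(1 + e^{βx}) dx = π·φ(0) + lim_{δ→0⁺} ∫_{|k| ≥ δ} (iπ/(β · sinh(πk/β))) · φ(k) dk; in particular the principal-value limit on the right exists. (This expresses the distributional identity F[1/(e^{βx}+1)] = π δ(k) + iπ/(β sinh(πk/β)), the second term taken as a principal value.) -/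
open MeasureTheory Real Complex Filter Topology

/-!
Up to the scaling `x = 2πy`, the Fermi function is a sigmoid `h`, and `h - 1/2` is odd with an
integrable derivative. The constant `1/2` has Fourier transform `δ/2`. For an odd function `g` with
integrable derivative, `𝓕 g` is the principal value of `𝓕 g'(k) / (2πik)`: an odd kernel only sees
the odd part of a test function, which vanishes linearly at `0`, so the singularity is integrable
against it. Finally, substituting `u = σ(x)` turns the Fourier integral of `σ' = σ (1 - σ)` into the
Beta integral `B(1 + s, 1 - s)` with `s = -2πik`, and the reflection formula evaluates it as
`πs / sin (πs)`, whence the `sinh`.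
-/

open scoped FourierTransform

section OddPart

variable {G E : Type*} [AddGroup G] [NormedAddCommGroup E] [NormedSpace ℂ E]

/-- The odd part of a function `f`; only this part of `f` is seen by an odd kernel. -/
noncomputable def oddPart (f : G → E) (x : G) : E := (2 : ℂ)⁻¹ • (f x - f (-x))

lemma oddPart_zero (f : G → E) : oddPart f 0 = 0 := by
  simp [oddPart]

variable [MeasurableSpace G] [MeasurableNeg G] {μ : Measure G} [μ.IsNegInvariant]

lemma integrable_oddPart {f : G → E} (hf : Integrable f μ) :
    Integrable (oddPart f) μ :=
  (hf.sub hf.comp_neg).smul (2 : ℂ)⁻¹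

lemma setIntegral_smul_eq_setIntegral_smul_oddPart {S : Set G} {K : G → ℂ} {f : G → E}
    (hS : -S = S) (hK : K.Odd) (hKf : IntegrableOn (fun x => K x • f x) S μ) :
    ∫ x in S, K x • f x ∂μ = ∫ x in S, K x • oddPart f x ∂μ := by
  have emb := (MeasurableEquiv.neg G).measurableEmbedding
  have mp : MeasurePreserving (fun x : G => -x) (μ.restrict S) (μ.restrict S) := by
    have := (Measure.measurePreserving_neg μ).restrict_preimage_emb emb S
    rwa [show (Neg.neg ⁻¹' S : Set G) = S from hS] at this
  have reflect : ∫ x in S, K (-x) • f (-x) ∂μ = ∫ x in S, K x • f x ∂μ :=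
    mp.integral_comp emb fun x => K x • f x
  have hKf' : IntegrableOn (fun x => K (-x) • f (-x)) S μ :=
    (mp.integrable_comp_emb emb (g := fun x => K x • f x)).2 hKf
  calc ∫ x in S, K x • f x ∂μ
      = (2 : ℂ)⁻¹ • ((∫ x in S, K x • f x ∂μ) + ∫ x in S, K (-x) • f (-x) ∂μ) := by
        rw [reflect]
        module
    _ = ∫ x in S, (2 : ℂ)⁻¹ • (K x • f x + K (-x) • f (-x)) ∂μ := by
        rw [integral_smul, integral_add hKf hKf']
    _ = ∫ x in S, K x • oddPart f x ∂μ := by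
        congr 1 with x
        rw [hK x, oddPart]
        module

end OddPart

lemma integrable_inv_smul_of_isBigO {E : Type*} [NormedAddCommGroup E] [NormedSpace ℝ E]
    {f : ℝ → E} (hf : Integrable f) (hO : f =O[𝓝 0] fun x : ℝ => x) :
    Integrable fun x => x⁻¹ • f x := by
  have meas : AEStronglyMeasurable (fun x : ℝ => x⁻¹ • f x) :=
    measurable_inv.aestronglyMeasurable.smul hf.aestronglyMeasurable
  obtain ⟨C, hC⟩ := hO.bound
  obtain ⟨ε, hε, hball⟩ := Metric.eventually_nhds_iff_ball.1 hC
  have near : IntegrableOn (fun x : ℝ => x⁻¹ • f x) (Metric.ball 0 ε) := by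
    refine .of_bound measure_ball_lt_top meas.restrict |C|
      ((ae_restrict_mem measurableSet_ball).mono fun x hx => ?_)
    rw [norm_smul, norm_inv]
    rcases eq_or_ne x 0 with rfl | hx0
    · simp
    · rw [inv_mul_le_iff₀ (norm_pos_iff.2 hx0), mul_comm]
      exact (hball x hx).trans (by gcongr; exact le_abs_self C)
  have far : IntegrableOn (fun x : ℝ => x⁻¹ • f x) (Metric.ball 0 ε)ᶜ := by
    refine (hf.norm.const_mul ε⁻¹).integrableOn.mono' meas.restrict
      ((ae_restrict_mem measurableSet_ball.compl).mono fun x hx => ?_)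
    rw [norm_smul, norm_inv]
    gcongr
    simpa using hx
  rw [← integrableOn_univ, ← Set.union_compl_self (Metric.ball (0 : ℝ) ε)]
  exact near.union far

lemma isBigO_oddPart {E : Type*} [NormedAddCommGroup E] [NormedSpace ℂ E] {f : ℝ → E}
    (hf : DifferentiableAt ℝ f 0) : oddPart f =O[𝓝 0] fun x : ℝ => x := by
  have hodd : DifferentiableAt ℝ (oddPart f) 0 := by
    have : DifferentiableAt ℝ (fun x => f (-x)) 0 :=
      DifferentiableAt.comp (0 : ℝ) (by simpa using hf) differentiableAt_id.neg
    exact (hf.sub this).const_smul (2 : ℂ)⁻¹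
  simpa [oddPart_zero] using hodd.isBigO_sub

lemma aecover_setOf_le_abs : AECover volume (𝓝[>] 0) fun δ : ℝ => {k : ℝ | δ ≤ |k|} where
  ae_eventually_mem := by
    filter_upwards [Measure.ae_ne volume (0 : ℝ)] with k hk
    exact nhdsWithin_le_nhds ((eventually_lt_nhds (abs_pos.2 hk)).mono fun _ => le_of_lt)
  measurableSet _ := measurableSet_le measurable_const measurable_abs

lemma tendsto_setIntegral_smul_of_odd {E : Type*} [NormedAddCommGroup E] [NormedSpace ℂ E]
    {K : ℝ → ℂ} {f : ℝ → E} (hK : K.Odd)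
    (hKf : ∀ δ > 0, IntegrableOn (fun k => K k • f k) {k | δ ≤ |k|})
    (hKf_odd : Integrable fun k => K k • oddPart f k) :
    Tendsto (fun δ : ℝ => ∫ k in {k : ℝ | δ ≤ |k|}, K k • f k) (𝓝[>] 0)
      (𝓝 (∫ k, K k • oddPart f k)) := by
  refine (aecover_setOf_le_abs.integral_tendsto_of_countably_generated hKf_odd).congr' ?_
  filter_upwards [self_mem_nhdsWithin] with δ hδ
  have neg_eq_self : -{k : ℝ | δ ≤ |k|} = {k : ℝ | δ ≤ |k|} := by ext; simp
  exact (setIntegral_smul_eq_setIntegral_smul_oddPart neg_eq_self hK (hKf δ hδ)).symm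

section Fourier

variable {V E : Type*} [NormedAddCommGroup V] [InnerProductSpace ℝ V] [MeasurableSpace V]
  [BorelSpace V] [FiniteDimensional ℝ V] [NormedAddCommGroup E] [NormedSpace ℂ E]

lemma norm_fourier_le_integral_norm (f : V → E) (k : V) : ‖𝓕 f k‖ ≤ ∫ x, ‖f x‖ :=
  VectorFourier.norm_fourierIntegral_le_integral_norm _ _ _ _ _

lemma continuous_fourier_of_integrable {f : V → E} (hf : Integrable f) : Continuous (𝓕 f) :=
  VectorFourier.fourierIntegral_continuous continuous_fourierChar continuous_inner hf

lemma fourier_comp_neg (f : V → E) (k : V) : 𝓕 (fun x => f (-x)) k = 𝓕 f (-k) := by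
  rw [← fourierInv_eq_fourier_comp_neg, fourierInv_eq_fourier_neg]

lemma fourier_even {f : V → E} (hf : f.Even) : (𝓕 f).Even := fun k => by
  rw [← fourier_comp_neg, funext hf]

lemma fourier_oddPart {f : V → E} (hf : Integrable f) : 𝓕 (oddPart f) = oddPart (𝓕 f) := by
  ext k
  have hk := (fourierIntegral_convergent_iff k).2 hf
  have hk' := (fourierIntegral_convergent_iff k).2 hf.comp_neg
  rw [oddPart, ← fourier_comp_neg, fourier_eq, fourier_eq, fourier_eq, ← integral_sub hk hk',
    ← integral_smul]
  congr 1 with x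
  rw [oddPart, ← smul_sub, smul_comm]

lemma integral_fourier_smul_eq [CompleteSpace E] {f : V → ℂ} {g : V → E} (hf : Integrable f)
    (hg : Integrable g) : ∫ x, 𝓕 f x • g x = ∫ k, f k • 𝓕 g k :=
  (VectorFourier.integral_fourierIntegral_smul_eq_flip (L := innerₗ V)
    continuous_fourierChar continuous_inner hf hg).trans (by rw [flip_innerₗ]; rfl)

lemma integral_fourier_eq [CompleteSpace E] {f : V → E} (hf : Integrable f)
    (hf' : Integrable (𝓕 f)) (hf0 : ContinuousAt f 0) : ∫ x, 𝓕 f x = f 0 := by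
  rw [← hf.fourierInv_fourier_eq hf' hf0, fourierInv_eq]
  simp

end Fourier

section Deriv

variable {F : Type*} [NormedAddCommGroup F] [NormedSpace ℝ F]

lemma deriv_even_of_odd {h : ℝ → F} (hh : h.Odd) : (deriv h).Even := fun x => by
  have reflect : (fun y => h (-y)) = -h := funext hh
  have := deriv_comp_neg h x
  rw [reflect, deriv.neg] at this
  exact (neg_inj.1 this).symm

lemma exists_norm_le_of_integrable_deriv [CompleteSpace F] {f : ℝ → F}
    (hf : Differentiable ℝ f) (hf' : Integrable (deriv f)) : ∃ C, ∀ x, ‖f x‖ ≤ C := by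
  refine ⟨(∫ x, ‖deriv f x‖) + ‖f 0‖, fun x => ?_⟩
  have increment : ‖f x - f 0‖ ≤ ∫ x, ‖deriv f x‖ := by
    rw [← intervalIntegral.integral_deriv_eq_sub (fun x _ => hf x) hf'.intervalIntegrable]
    exact intervalIntegral.norm_integral_le_integral_norm_uIoc.trans
      (setIntegral_le_integral hf'.norm (ae_of_all _ fun _ => norm_nonneg _))
  linarith [norm_sub_norm_le (f x) (f 0)]

lemma integrable_deriv_comp_mul_left {f : ℝ → F} (hf : Integrable (deriv f)) (c : ℝ) :
    Integrable (deriv fun x => f (c * x)) := by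
  rcases eq_or_ne c 0 with rfl | hc
  · simp
  rw [funext fun x => deriv_comp_mul_left c f x]
  exact (hf.comp_mul_left' hc).smul c

end Deriv

lemma fourier_deriv_comp_mul_left {E : Type*} [NormedAddCommGroup E] [NormedSpace ℂ E]
    (f : ℝ → E) (c k : ℝ) :
    𝓕 (deriv fun x => f (c * x)) k = (c / |c|) • 𝓕 (deriv f) (k / c) := by
  rcases eq_or_ne c 0 with rfl | hc
  · simp [fourier_real_eq]
  have rescale := Measure.integral_comp_mul_left (fun y => 𝐞 (-(y * (k / c))) • deriv f y) c
  rw [abs_inv] at rescale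
  rw [fourier_real_eq, fourier_real_eq, div_eq_mul_inv, mul_smul, ← rescale, ← integral_smul]
  congr 1 with x
  have phase : c * x * (k / c) = x * k := by field_simp
  rw [deriv_comp_mul_left, smul_comm, phase]

/-- As `h` is only bounded, `𝓕 h` is a tempered distribution; this is `𝓕 (deriv h) = 2πik 𝓕 h`
tested against `η`. -/
lemma integral_mul_fourier_deriv {η h : ℝ → ℂ} (hη : Integrable η)
    (hkη : Integrable fun k : ℝ => k • η k) (hkη' : Integrable (𝓕 fun k : ℝ => k • η k))
    (hh : Differentiable ℝ h) (hh' : Integrable (deriv h)) :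
    ∫ k, η k * 𝓕 (deriv h) k = 2 * π * I * ∫ x, 𝓕 (fun k : ℝ => k • η k) x * h x := by
  have hderiv (x : ℝ) : HasDerivAt (𝓕 η) (-(2 * π * I) * 𝓕 (fun k : ℝ => k • η k) x) x := by
    refine (hasDerivAt_fourier hη hkη x).congr_deriv ?_
    rw [fourier_eq, fourier_eq, ← integral_const_mul]
    congr 1 with k
    simp only [Circle.smul_def, smul_eq_mul, real_smul]
    ring
  obtain ⟨C, hC⟩ := exists_norm_le_of_integrable_deriv hh hh'
  have hlim : Tendsto (𝓕 η * h) (cocompact ℝ) (𝓝 0) :=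
    (Real.zero_at_infty_fourier η).zero_mul_isBoundedUnder_le
      (isBoundedUnder_of ⟨C, hC⟩)
  have transfer : ∫ k, η k * 𝓕 (deriv h) k = ∫ x, 𝓕 η x * deriv h x :=
    (integral_fourier_smul_eq hη hh').symm
  rw [transfer, integral_mul_deriv_eq_deriv_mul (fun x _ => hderiv x) (fun x _ => (hh x).hasDerivAt)
    (hh'.bdd_mul (continuous_fourier_of_integrable hη).aestronglyMeasurable
      (ae_of_all _ (norm_fourier_le_integral_norm η)))
    ((hkη'.const_mul _).mul_bdd hh.continuous.aestronglyMeasurable (ae_of_all _ hC))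
    (hlim.mono_left atBot_le_cocompact) (hlim.mono_left atTop_le_cocompact)]
  simp only [neg_mul, mul_assoc, integral_neg, integral_const_mul]
  ring

lemma integrableOn_fourier_div_mul {f φ : ℝ → ℂ} (hf : Integrable f) (hφ : Integrable φ) {δ : ℝ}
    (hδ : 0 < δ) :
    IntegrableOn (fun k : ℝ => 𝓕 f k / (2 * π * I * k) * φ k) {k | δ ≤ |k|} := by
  have kernel_meas : Measurable fun k : ℝ => 𝓕 f k / (2 * π * I * k) :=
    (continuous_fourier_of_integrable hf).measurable.div (by fun_prop)
  refine hφ.integrableOn.bdd_mul (c := (∫ x, ‖f x‖) / (2 * π * δ))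
    kernel_meas.aestronglyMeasurable ?_
  filter_upwards [ae_restrict_mem (measurableSet_le measurable_const measurable_abs)] with k hk
  have norm_denom : ‖(2 * π * I * k : ℂ)‖ = 2 * π * |k| := by
    simp [abs_of_pos pi_pos]
  rw [norm_div, norm_denom]
  gcongr
  exact norm_fourier_le_integral_norm f k

lemma smul_inv_smul_of_map_zero {E : Type*} [AddCommGroup E] [Module ℝ E] {ψ : ℝ → E}
    (hψ0 : ψ 0 = 0) : (fun k : ℝ => k • k⁻¹ • ψ k) = ψ := by
  ext k
  rcases eq_or_ne k 0 with rfl | hk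
  · rw [zero_smul, hψ0]
  · exact smul_inv_smul₀ hk _

lemma integrable_fourier_div_mul_of_isBigO {f ψ : ℝ → ℂ} (hf : Integrable f) (hψ : Integrable ψ)
    (hO : ψ =O[𝓝 0] fun k : ℝ => k) :
    Integrable fun k : ℝ => 𝓕 f k / (2 * π * I * k) * ψ k := by
  refine (((integrable_inv_smul_of_isBigO hψ hO).mul_bdd
    (continuous_fourier_of_integrable hf).aestronglyMeasurable
    (ae_of_all _ (norm_fourier_le_integral_norm f))).const_mul (2 * π * I)⁻¹).congr
    (ae_of_all _ fun k => ?_)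
  simp only [real_smul, ofReal_inv]
  ring

lemma integral_fourier_mul_eq_of_isBigO {h ψ : ℝ → ℂ} (hh : Differentiable ℝ h)
    (hh' : Integrable (deriv h)) (hψ : Integrable ψ) (hψ' : Integrable (𝓕 ψ))
    (hO : ψ =O[𝓝 0] fun k : ℝ => k) :
    ∫ x, 𝓕 ψ x * h x = ∫ k : ℝ, 𝓕 (deriv h) k / (2 * π * I * k) * ψ k := by
  have smul_η : (fun k : ℝ => k • k⁻¹ • ψ k) = ψ :=
    smul_inv_smul_of_map_zero (hO.eq_zero_imp.self_of_nhds rfl)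
  calc ∫ x, 𝓕 ψ x * h x
      = (2 * π * I)⁻¹ * (2 * π * I * ∫ x, 𝓕 (fun k : ℝ => k • k⁻¹ • ψ k) x * h x) := by
        rw [inv_mul_cancel_left₀ two_pi_I_ne_zero, smul_η]
    _ = (2 * π * I)⁻¹ * ∫ k : ℝ, k⁻¹ • ψ k * 𝓕 (deriv h) k := by
        rw [integral_mul_fourier_deriv (integrable_inv_smul_of_isBigO hψ hO)
          (smul_η.symm ▸ hψ) (smul_η.symm ▸ hψ') hh hh']
    _ = ∫ k : ℝ, 𝓕 (deriv h) k / (2 * π * I * k) * ψ k := by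
        rw [← integral_const_mul]
        congr 1 with k
        simp only [real_smul, ofReal_inv]
        ring

lemma tendsto_setIntegral_fourier_deriv_mul_of_odd {h φ : ℝ → ℂ} (hodd : h.Odd)
    (hh : Differentiable ℝ h) (hh' : Integrable (deriv h)) (hφ : Integrable φ)
    (hφ' : Integrable (𝓕 φ)) (hφ0 : DifferentiableAt ℝ φ 0) :
    Tendsto (fun δ : ℝ => ∫ k in {k : ℝ | δ ≤ |k|}, 𝓕 (deriv h) k / (2 * π * I * k) * φ k)
      (𝓝[>] 0) (𝓝 (∫ x, 𝓕 φ x * h x)) := by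
  obtain ⟨C, hC⟩ := exists_norm_le_of_integrable_deriv hh hh'
  have hO := isBigO_oddPart hφ0
  have value : ∫ x, 𝓕 φ x * h x
      = ∫ k : ℝ, 𝓕 (deriv h) k / (2 * π * I * k) * oddPart φ k := by
    have odd_pairing := setIntegral_smul_eq_setIntegral_smul_oddPart (μ := volume) Set.neg_univ
      hodd (hφ'.bdd_mul hh.continuous.aestronglyMeasurable (ae_of_all _ hC)).integrableOn
    rw [← integral_fourier_mul_eq_of_isBigO hh hh' (integrable_oddPart hφ)
      (fourier_oddPart hφ ▸ integrable_oddPart hφ') hO, fourier_oddPart hφ]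
    simpa only [setIntegral_univ, smul_eq_mul, mul_comm] using odd_pairing
  rw [value]
  refine tendsto_setIntegral_smul_of_odd (fun k => ?_)
    (fun δ hδ => integrableOn_fourier_div_mul hh' hφ hδ)
    (integrable_fourier_div_mul_of_isBigO hh' (integrable_oddPart hφ) hO)
  simp only [fourier_even (deriv_even_of_odd hodd) k, ofReal_neg, mul_neg, div_neg]

theorem tendsto_setIntegral_fourier_deriv_mul {h φ : ℝ → ℂ} {c : ℂ}
    (hc : ∀ x, h x + h (-x) = 2 * c) (hh : Differentiable ℝ h) (hh' : Integrable (deriv h))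
    (hφ : Integrable φ) (hφ' : Integrable (𝓕 φ)) (hφ0 : DifferentiableAt ℝ φ 0) :
    Tendsto (fun δ : ℝ => ∫ k in {k : ℝ | δ ≤ |k|}, 𝓕 (deriv h) k / (2 * π * I * k) * φ k)
      (𝓝[>] 0) (𝓝 ((∫ x, 𝓕 φ x * h x) - c * φ 0)) := by
  have hodd : (fun x => h x - c).Odd := fun x => by linear_combination hc x
  have deriv_eq : deriv (fun x => h x - c) = deriv h := funext fun x => deriv_sub_const c
  obtain ⟨C, hC⟩ := exists_norm_le_of_integrable_deriv hh hh'
  have split : ∫ x, 𝓕 φ x * (h x - c) = (∫ x, 𝓕 φ x * h x) - c * φ 0 := by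
    simp only [mul_sub]
    rw [integral_sub (hφ'.mul_bdd hh.continuous.aestronglyMeasurable (ae_of_all _ hC))
      (hφ'.mul_const c), integral_mul_const, integral_fourier_eq hφ hφ' hφ0.continuousAt, mul_comm]
  have := tendsto_setIntegral_fourier_deriv_mul_of_odd hodd (hh.sub_const c)
    (deriv_eq ▸ hh') hφ hφ' hφ0
  rwa [split, deriv_eq] at this

lemma hasDerivAt_ofReal_sigmoid (x : ℝ) :
    HasDerivAt (fun x => (sigmoid x : ℂ)) (sigmoid x * (1 - sigmoid x)) x := by
  simpa using (hasDerivAt_sigmoid x).ofReal_comp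

lemma sigmoid_mul_one_sub_sigmoid_pos (x : ℝ) : 0 < sigmoid x * (1 - sigmoid x) :=
  mul_pos (sigmoid_pos x) (sub_pos.2 (sigmoid_lt_one x))

lemma integral_Ioo_eq_integral_sigmoid {E : Type*} [NormedAddCommGroup E] [NormedSpace ℝ E]
    (f : ℝ → E) :
    ∫ u in Set.Ioo 0 1, f u = ∫ x, (sigmoid x * (1 - sigmoid x)) • f (sigmoid x) := by
  rw [← range_sigmoid, ← Set.image_univ, integral_image_eq_integral_abs_deriv_smul .univ
    (fun x _ => (hasDerivAt_sigmoid x).hasDerivWithinAt) sigmoid_injective.injOn, setIntegral_univ]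
  congr 1 with x
  rw [abs_of_pos (sigmoid_mul_one_sub_sigmoid_pos x)]

lemma integrable_deriv_sigmoid : Integrable (deriv sigmoid) := by
  have hInt := (integrableOn_image_iff_integrableOn_abs_deriv_smul .univ
    (fun x _ => (hasDerivAt_sigmoid x).hasDerivWithinAt) sigmoid_injective.injOn
    fun _ => (1 : ℝ)).1 (by simp [Set.image_univ, range_sigmoid])
  rw [integrableOn_univ] at hInt
  refine hInt.congr (ae_of_all _ fun x => ?_)
  simp only [deriv_sigmoid, smul_eq_mul, mul_one, abs_of_pos (sigmoid_mul_one_sub_sigmoid_pos x)]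

lemma integrable_deriv_ofReal_sigmoid : Integrable (deriv fun x => (sigmoid x : ℂ)) := by
  have deriv_eq : (deriv fun x => (sigmoid x : ℂ)) = fun x => ((deriv sigmoid x : ℝ) : ℂ) :=
    funext fun x => (hasDerivAt_ofReal_sigmoid x).deriv.trans (by simp [deriv_sigmoid])
  exact deriv_eq ▸ integrable_deriv_sigmoid.ofReal

lemma sigmoid_div_one_sub_sigmoid (x : ℝ) : sigmoid x / (1 - sigmoid x) = Real.exp x := by
  rw [← sigmoid_neg, ← sigmoid_mul_rexp_neg, Real.exp_neg, div_mul_cancel_left₀ (sigmoid_pos x).ne',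
    inv_inv]

lemma sigmoid_cpow_mul_one_sub_sigmoid_cpow_neg (s : ℂ) (x : ℝ) :
    (sigmoid x : ℂ) ^ s * (1 - sigmoid x : ℂ) ^ (-s) = cexp (s * x) := by
  have hv : 0 < 1 - sigmoid x := sub_pos.2 (sigmoid_lt_one x)
  calc (sigmoid x : ℂ) ^ s * (1 - sigmoid x : ℂ) ^ (-s)
      = ((sigmoid x / (1 - sigmoid x) : ℝ) : ℂ) ^ s := by
        rw [ofReal_div, div_cpow_ofReal_nonneg (sigmoid_pos x).le hv.le, cpow_neg, div_eq_mul_inv,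
          ofReal_sub, ofReal_one]
    _ = cexp (s * x) := by
        rw [sigmoid_div_one_sub_sigmoid, cpow_def_of_ne_zero (by simp), ← ofReal_log (exp_pos x).le,
          Real.log_exp, mul_comm]

lemma integral_deriv_sigmoid_mul_cexp {s : ℂ} (hs : |s.re| < 1) :
    ∫ x : ℝ, (sigmoid x * (1 - sigmoid x) : ℂ) * cexp (s * x)
      = Complex.Gamma (1 + s) * Complex.Gamma (1 - s) := by
  obtain ⟨hs₁, hs₂⟩ := abs_lt.1 hs
  have Gamma_two : Complex.Gamma (1 + s + (1 - s)) = 1 := by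
    rw [add_add_sub_cancel, one_add_one_eq_two, Complex.Gamma_ofNat_eq_factorial]
    simp
  calc ∫ x : ℝ, (sigmoid x * (1 - sigmoid x) : ℂ) * cexp (s * x)
      = ∫ u in Set.Ioo (0 : ℝ) 1, (u : ℂ) ^ s * (1 - u : ℂ) ^ (-s) := by
        rw [integral_Ioo_eq_integral_sigmoid]
        simp [sigmoid_cpow_mul_one_sub_sigmoid_cpow_neg]
    _ = betaIntegral (1 + s) (1 - s) := by
        rw [betaIntegral, intervalIntegral.integral_of_le zero_le_one, integral_Ioc_eq_integral_Ioo,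
          add_sub_cancel_left, sub_sub_cancel_left]
    _ = Complex.Gamma (1 + s) * Complex.Gamma (1 - s) := by
        rw [Complex.Gamma_mul_Gamma_eq_betaIntegral (by simpa using neg_lt_iff_pos_add'.1 hs₁)
          (by simpa using hs₂), Gamma_two, one_mul]

lemma fourier_deriv_sigmoid {k : ℝ} (hk : k ≠ 0) :
    𝓕 (deriv fun x => (sigmoid x : ℂ)) k = 2 * π ^ 2 * k / Real.sinh (2 * π ^ 2 * k) := by
  set s : ℂ := -(2 * π * k) * I with hs
  have hs0 : s ≠ 0 := by simp [hs, hk, pi_ne_zero]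
  calc 𝓕 (deriv fun x => (sigmoid x : ℂ)) k
      = ∫ x : ℝ, (sigmoid x * (1 - sigmoid x) : ℂ) * cexp (s * x) := by
        rw [fourier_real_eq_integral_exp_smul]
        congr 1 with x
        rw [(hasDerivAt_ofReal_sigmoid x).deriv, smul_eq_mul, mul_comm, hs]
        push_cast
        ring_nf
    _ = s * (Complex.Gamma s * Complex.Gamma (1 - s)) := by
        rw [integral_deriv_sigmoid_mul_cexp (by simp [hs]), add_comm, Complex.Gamma_add_one s hs0,
          mul_assoc]
    _ = 2 * π ^ 2 * k / Real.sinh (2 * π ^ 2 * k) := by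
        have phase : π * s = -(2 * π ^ 2 * k) * I := by rw [hs]; ring
        rw [Complex.Gamma_mul_Gamma_one_sub, phase, sin_mul_I, Complex.sinh_neg, hs]
        push_cast
        field_simp

lemma integral_mul_cexp_eq_fourier (f : ℝ → ℂ) (x : ℝ) :
    ∫ k : ℝ, f k * cexp (-I * k * x) = 𝓕 f (x / (2 * π)) := by
  rw [fourier_real_eq_integral_exp_smul]
  congr 1 with k
  rw [smul_eq_mul, mul_comm]
  congr 2
  push_cast
  field_simp

lemma two_pi_mul_fourier_deriv_sigmoid_div {β : ℝ} (hβ : 0 < β) {k : ℝ} (hk : k ≠ 0) :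
    2 * π * (𝓕 (deriv fun x : ℝ => (sigmoid (-(2 * π * β) * x) : ℂ)) k / (2 * π * I * k))
      = I * π / (β * Real.sinh (π * k / β)) := by
  have hc : 0 < 2 * π * β := by positivity
  have harg : 2 * π ^ 2 * (k / -(2 * π * β)) = -(π * k / β) := by field_simp
  rw [fourier_deriv_comp_mul_left (fun x => (sigmoid x : ℂ)),
    fourier_deriv_sigmoid (div_ne_zero hk (neg_ne_zero.2 hc.ne')), abs_neg, abs_of_pos hc,
    neg_div, div_self hc.ne', neg_one_smul]
  norm_cast
  rw [harg, Real.sinh_neg]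
  push_cast
  field_simp
  rw [I_sq, mul_assoc, div_mul_cancel_left₀ (ofReal_ne_zero.2 hk), neg_div, one_div]

lemma two_pi_mul_integral_fourier_mul_sigmoid (φ : ℝ → ℂ) (β : ℝ) :
    2 * π * ∫ y, 𝓕 φ y * sigmoid (-(2 * π * β) * y)
      = ∫ x : ℝ, (∫ k : ℝ, φ k * cexp (-I * k * x)) / (1 + Real.exp (β * x)) := by
  have rescale := Measure.integral_comp_div
    (fun y => 𝓕 φ y * (sigmoid (-(2 * π * β) * y) : ℂ)) (2 * π)
  rw [abs_of_pos two_pi_pos, real_smul, ofReal_mul, ofReal_ofNat] at rescale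
  rw [← rescale]
  congr 1 with x
  have unscale : -(2 * π * β) * (x / (2 * π)) = -(β * x) := by field_simp
  rw [integral_mul_cexp_eq_fourier, unscale, sigmoid_def, neg_neg, div_eq_mul_inv]
  push_cast
  rfl

theorem stmt_8_general {β : ℝ} (hβ : 0 < β) {φ : ℝ → ℂ} (hφ : Integrable φ)
    (hφ' : Integrable (𝓕 φ)) (hφ0 : DifferentiableAt ℝ φ 0) :
    Tendsto (fun δ : ℝ => ∫ k in {k : ℝ | δ ≤ |k|}, I * π / (β * Real.sinh (π * k / β)) * φ k)
      (𝓝[>] 0) (𝓝 ((∫ x : ℝ, (∫ k : ℝ, φ k * cexp (-I * k * x)) / (1 + Real.exp (β * x)))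
        - π * φ 0)) := by
  have value : (∫ x : ℝ, (∫ k : ℝ, φ k * cexp (-I * k * x)) / (1 + Real.exp (β * x))) - π * φ 0
      = 2 * π * ((∫ y, 𝓕 φ y * sigmoid (-(2 * π * β) * y)) - 1 / 2 * φ 0) := by
    rw [← two_pi_mul_integral_fourier_mul_sigmoid]
    ring
  have hsymm (x : ℝ) : (sigmoid (-(2 * π * β) * x) + sigmoid (-(2 * π * β) * -x) : ℂ)
      = 2 * (1 / 2) := by
    rw [mul_neg, sigmoid_neg]
    push_cast
    ring
  have limit := tendsto_setIntegral_fourier_deriv_mul hsymm (by fun_prop)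
    (integrable_deriv_comp_mul_left integrable_deriv_ofReal_sigmoid _) hφ hφ' hφ0
  rw [value]
  refine (limit.const_mul (2 * π : ℂ)).congr' ?_
  filter_upwards [self_mem_nhdsWithin] with δ hδ
  rw [← integral_const_mul]
  refine setIntegral_congr_fun (measurableSet_le measurable_const measurable_abs) fun k hk => ?_
  have k_ne_zero : k ≠ 0 := abs_pos.1 (lt_of_lt_of_le hδ hk)
  simp only [← mul_assoc, ← two_pi_mul_fourier_deriv_sigmoid_div hβ k_ne_zero]

theorem stmt_8 (β : ℝ) (hβ : 0 < β) (φ : SchwartzMap ℝ ℂ) :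
    Filter.Tendsto
      (fun δ : ℝ => ∫ k in {k : ℝ | δ ≤ |k|},
        (Complex.I * Real.pi / (β * Real.sinh (Real.pi * k / β))) * φ k)
      (nhdsWithin 0 (Set.Ioi 0))
      (nhds ((∫ x : ℝ,
          (∫ k : ℝ, φ k * Complex.exp (-Complex.I * k * x)) / (1 + Real.exp (β * x)))
        - Real.pi * φ 0)) :=
  stmt_8_general hβ φ.integrable (𝓕 φ : SchwartzMap ℝ ℂ).integrable φ.differentiableAt
end
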